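/- arXiv:math/0608655 — 2 statements merged into one kernel-verified Lean document; each statement's English description precedes it below -/
import Mathlib

section
/- Let F be a field of characteristic zero, A a commutative F-algebra, n a natural number, (V, π) a universal n-dimensional representation of A, and let GL_n(F) act on V by F-algebra automorphisms via the universal property applied to conjugation of π. Then the invariant subalgebra V^{GL_n(F)} is generated as an F-algebra by the traces tr(π(a)) of the matrices π(a), as a ranges over A. -/
open scoped TensorProduct
open PiTensorProduct

universe u v w

namespace SymmetricProduct

set_option linter.unusedSectionVars false

variable (F : Type u) [Field F] [CharZero F] (A : Type v) [CommRing A] [Algebra F A] (n : ℕ)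

/-- `(V, π)` is a universal `n`-dimensional representation of `A` over `F`:
for every commutative `F`-algebra `B`, composing with `π` and applying `ρ` entrywise
is a bijection `AlgHom_F(V, B) ≃ AlgHom_F(A, Mat_n(B))`. -/
def IsUniversalRep {V : Type w} [CommRing V] [Algebra F V]
    (π : A →ₐ[F] Matrix (Fin n) (Fin n) V) : Prop :=
  ∀ (B : Type w) [CommRing B] [Algebra F B],
    Function.Bijective (fun ρ : V →ₐ[F] B => (AlgHom.mapMatrix ρ).comp π)

/-- The subalgebra of elements fixed by a family of algebra endomorphisms. -/
def fixedSubalgebra {V : Type w} [CommRing V] [Algebra F V] {G : Type*}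
    (σ : G → (V →ₐ[F] V)) : Subalgebra F V where
  carrier := {v | ∀ g : G, σ g v = v}
  mul_mem' := fun hx hy g => by rw [_root_.map_mul, hx g, hy g]
  add_mem' := fun hx hy g => by rw [_root_.map_add, hx g, hy g]
  one_mem' := fun g => map_one _
  algebraMap_mem' := fun r g => AlgHom.commutes _ r

/-- `σ` is the action of `GL_n(F)` on `V` obtained, via the universal property, from
conjugation of the universal representation `π`. -/
def IsConjAction {V : Type w} [CommRing V] [Algebra F V]
    (π : A →ₐ[F] Matrix (Fin n) (Fin n) V)
    (σ : GL (Fin n) F → (V →ₐ[F] V)) : Prop :=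
  ∀ (g : GL (Fin n) F) (a : A),
    (AlgHom.mapMatrix (σ g)) (π a) =
      ((g : Matrix (Fin n) (Fin n) F).map (algebraMap F V)) * π a *
        (((g⁻¹ : GL (Fin n) F) : Matrix (Fin n) (Fin n) F).map (algebraMap F V))


/-- Tensor product of a family of matrices, as a matrix indexed by multi-indices. -/
def tpf {k m : ℕ} {R : Type*} [CommRing R] (M : Fin k → Matrix (Fin m) (Fin m) R) :
    Matrix (Fin k → Fin m) (Fin k → Fin m) R :=
  Matrix.of fun I J => ∏ s, M s (I s) (J s)

lemma tpf_apply {k m : ℕ} {R : Type*} [CommRing R] (M : Fin k → Matrix (Fin m) (Fin m) R)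
    (I J) : tpf M I J = ∏ s, M s (I s) (J s) := rfl

lemma tpf_mul {k m : ℕ} {R : Type*} [CommRing R] (M N : Fin k → Matrix (Fin m) (Fin m) R) :
    tpf (fun s => M s * N s) = tpf M * tpf N := by
  ext I J
  simp only [tpf_apply, Matrix.mul_apply, Finset.prod_univ_sum, Fintype.piFinset_univ,
    Finset.prod_mul_distrib]

lemma tpf_one {k m : ℕ} {R : Type*} [CommRing R] :
    tpf (fun _ : Fin k => (1 : Matrix (Fin m) (Fin m) R)) = 1 := by
  ext I J
  rw [tpf_apply]
  by_cases h : I = J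
  · subst h; simp
  · rw [Matrix.one_apply_ne h]
    obtain ⟨s, hs⟩ := Function.ne_iff.1 h
    exact Finset.prod_eq_zero (Finset.mem_univ s) (Matrix.one_apply_ne hs)

lemma tpf_transpose {k m : ℕ} {R : Type*} [CommRing R] (M : Fin k → Matrix (Fin m) (Fin m) R) :
    tpf (fun s => (M s).transpose) = (tpf M).transpose := rfl

lemma tpf_map {k m : ℕ} {R S : Type*} [CommRing R] [CommRing S] (f : R →+* S)
    (M : Fin k → Matrix (Fin m) (Fin m) R) :
    tpf (fun s => (M s).map f) = (tpf M).map f := by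
  ext I J
  simp [tpf_apply]

/-- Averaging over a transpose-closed group over `ℚ`. -/
lemma reynolds {E : Type*} [AddCommGroup E] [Module ℚ E] [FiniteDimensional ℚ E]
    (B : LinearMap.BilinForm ℚ E) (hs : ∀ x y, B x y = B y x) (hpos : ∀ x, B x x = 0 → x = 0)
    {G : Type*} [Mul G] (ρ : G → E →ₗ[ℚ] E) (hmul : ∀ g h x, ρ (g * h) x = ρ g (ρ h x))
    (t : G → G) (hadj : ∀ g x y, B (ρ g x) y = B x (ρ (t g) y)) (x : E) :
    ∃ r, (∀ g, ρ g r = r) ∧ x - r ∈ Submodule.span ℚ (Set.range fun g => ρ g x - x) := by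
  set D := Submodule.span ℚ (Set.range fun g => ρ g x - x) with hD
  have hstab : ∀ g, ∀ d ∈ D, ρ g d ∈ D := by
    intro g d hd
    induction hd using Submodule.span_induction with
    | mem d hd =>
      obtain ⟨h, rfl⟩ := hd
      have : ρ g (ρ h x - x) = (ρ (g * h) x - x) - (ρ g x - x) := by
        rw [map_sub, hmul]; abel
      simp only [this]
      exact D.sub_mem (Submodule.subset_span ⟨_, rfl⟩) (Submodule.subset_span ⟨_, rfl⟩)
    | zero => simp
    | add a b _ _ ha hb => rw [map_add]; exact D.add_mem ha hb
    | smul c a _ ha => rw [map_smul]; exact D.smul_mem c ha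
  have hdisj : Disjoint D (B.orthogonal D) := by
    rw [Submodule.disjoint_def]
    intro y hy hy'
    exact hpos y (hy' y hy)
  have hrefl : B.IsRefl := fun a b h => by rw [hs]; exact h
  have hc := (LinearMap.BilinForm.isCompl_orthogonal_iff_disjoint (B := B) (W := D) hrefl).2 hdisj
  have hx : x ∈ D ⊔ B.orthogonal D := by rw [hc.sup_eq_top]; trivial
  obtain ⟨d, hd, r, hr, hdr⟩ := Submodule.mem_sup.1 hx
  refine ⟨r, fun g => ?_, by rw [← hdr]; simpa using hd⟩
  have h1 : ρ g r - r ∈ D := by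
    have : ρ g r - r = (ρ g x - x) - (ρ g d - d) := by rw [← hdr, map_add]; abel
    rw [this]
    exact D.sub_mem (Submodule.subset_span ⟨g, rfl⟩) (D.sub_mem (hstab g d hd) hd)
  have h2 : ρ g r - r ∈ B.orthogonal D := by
    intro y hy
    change B y (ρ g r - r) = 0
    have e1 : B y (ρ g r) = 0 := by
      rw [hs, hadj, hs]
      exact hr _ (hstab _ y hy)
    have e2 : B y r = 0 := hr y hy
    rw [map_sub, e1, e2, sub_zero]
  exact sub_eq_zero.1 (Submodule.disjoint_def.1 hdisj _ h1 h2)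

/-- Functions with the same multiset of values differ by a permutation. -/
lemma exists_perm_of_count {k : ℕ} {τ : Type*} (K K' : Fin k → τ)
    (h : ∑ s, Finsupp.single (K s) 1 = ∑ s, (Finsupp.single (K' s) 1 : τ →₀ ℕ)) :
    ∃ σ : Equiv.Perm (Fin k), K' ∘ σ = K := by
  classical
  have hc : ∀ c, Fintype.card {s // K s = c} = Fintype.card {s // K' s = c} := by
    intro c
    have := DFunLike.congr_fun h c
    simpa [Finsupp.single_apply, Fintype.card_subtype] using this
  refine ⟨Equiv.ofFiberEquiv fun c => Fintype.equivOfCardEq (hc c), ?_⟩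
  ext s
  exact Equiv.ofFiberEquiv_map _ s

/-- A functional vanishing on the tensor powers of invertible matrices vanishes on symmetric
tensors. -/
lemma functional_vanish {k m : ℕ} (w : (Fin k → Fin m × Fin m) → ℚ)
    (hw : ∀ h : GL (Fin m) ℚ, ∑ K, w K * ∏ s, (h : Matrix (Fin m) (Fin m) ℚ) (K s).1 (K s).2 = 0)
    (Z : (Fin k → Fin m × Fin m) → ℚ) (hZ : ∀ (σ : Equiv.Perm (Fin k)) K, Z (K ∘ σ) = Z K) :
    ∑ K, w K * Z K = 0 := by
  classical
  let mo : (Fin k → Fin m × Fin m) → (Fin m × Fin m →₀ ℕ) :=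
    fun K => ∑ s, Finsupp.single (K s) 1
  let p : MvPolynomial (Fin m × Fin m) ℚ := ∑ K, MvPolynomial.monomial (mo K) (w K)
  have hmono : ∀ K, MvPolynomial.monomial (mo K) (w K) =
      MvPolynomial.C (w K) * ∏ s, MvPolynomial.X (K s) := by
    intro K
    simp only [mo, MvPolynomial.X, ← MvPolynomial.monomial_sum_one,
      MvPolynomial.C_mul_monomial, mul_one]
  have hp : p = 0 := by
    have hdet := Matrix.det_mvPolynomialX_ne_zero (Fin m) ℚ
    refine (mul_eq_zero.1 (?_ : p * (Matrix.mvPolynomialX (Fin m) (Fin m) ℚ).det = 0)).resolve_right hdet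
    apply MvPolynomial.funext
    intro x
    rw [map_mul, map_zero]
    let M : Matrix (Fin m) (Fin m) ℚ := Matrix.of fun i j => x (i, j)
    have hM : MvPolynomial.eval x (Matrix.mvPolynomialX (Fin m) (Fin m) ℚ).det = M.det := by
      rw [RingHom.map_det]
      congr 1
      ext i j
      simp [M]
    rw [hM]
    by_cases hd : M.det = 0
    · rw [hd, mul_zero]
    · have := hw (Matrix.GeneralLinearGroup.mkOfDetNeZero M hd)
      have h2 : MvPolynomial.eval x p = 0 := by
        rw [← this]
        simp only [p, hmono, map_sum, map_mul, MvPolynomial.eval_C, map_prod, MvPolynomial.eval_X]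
        rfl
      rw [h2, zero_mul]
  have hfac : Function.FactorsThrough Z mo := by
    intro K K' h
    obtain ⟨σ, hσ⟩ := exists_perm_of_count K K' h
    rw [← hσ, hZ]
  let z : (Fin m × Fin m →₀ ℕ) → ℚ := Function.extend mo Z 0
  let Lf : MvPolynomial (Fin m × Fin m) ℚ →ₗ[ℚ] ℚ :=
    (MvPolynomial.basisMonomials (Fin m × Fin m) ℚ).constr ℚ z
  have hL : ∀ K, Lf (MvPolynomial.monomial (mo K) (w K)) = w K * Z K := by
    intro K
    have : MvPolynomial.monomial (mo K) (w K) =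
      w K • MvPolynomial.basisMonomials (Fin m × Fin m) ℚ (mo K) := by
      simp [MvPolynomial.smul_monomial]
    rw [this, map_smul, Module.Basis.constr_basis, smul_eq_mul]
    congr 1
    exact hfac.extend_apply 0 K
  have := congrArg Lf hp
  simpa only [p, map_sum, hL, map_zero] using this

/-- Matrices commuting with all tensor powers of invertible matrices commute with all matrices
that are invariant under simultaneous permutation of indices. -/
lemma commute_symm {k m : ℕ} (Y : Matrix (Fin k → Fin m) (Fin k → Fin m) ℚ)
    (hY : ∀ h : GL (Fin m) ℚ, Y * tpf (fun _ : Fin k => (h : Matrix (Fin m) (Fin m) ℚ)) =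
      tpf (fun _ : Fin k => (h : Matrix (Fin m) (Fin m) ℚ)) * Y)
    (Z : Matrix (Fin k → Fin m) (Fin k → Fin m) ℚ)
    (hZ : ∀ (σ : Equiv.Perm (Fin k)) I J, Z (I ∘ σ) (J ∘ σ) = Z I J) :
    Y * Z = Z * Y := by
  classical
  ext P Q
  let e : (Fin k → Fin m × Fin m) ≃ (Fin k → Fin m) × (Fin k → Fin m) :=
    Equiv.arrowProdEquivProdArrow (Fin k) (fun _ => Fin m) (fun _ => Fin m)
  let w : (Fin k → Fin m) × (Fin k → Fin m) → ℚ := fun q =>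
    (if q.2 = Q then Y P q.1 else 0) - (if q.1 = P then Y q.2 Q else 0)
  have key : ∀ T : Matrix (Fin k → Fin m) (Fin k → Fin m) ℚ,
      ∑ K, w (e K) * T (e K).1 (e K).2 = (Y * T) P Q - (T * Y) P Q := by
    intro T
    rw [e.sum_comp (fun q => w q * T q.1 q.2), Fintype.sum_prod_type]
    simp only [w, sub_mul, Finset.sum_sub_distrib, ite_mul, zero_mul, Finset.sum_ite_eq',
      Finset.mem_univ, if_true, Matrix.mul_apply]
    congr 1
    rw [Finset.sum_comm]
    simp [mul_comm]
  have := functional_vanish (fun K => w (e K)) (fun h => ?_) (fun K => Z (e K).1 (e K).2)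
    (fun σ K => hZ σ (e K).1 (e K).2)
  · rw [key] at this
    linarith
  · have h1 := key (tpf fun _ => (h : Matrix (Fin m) (Fin m) ℚ))
    rw [hY h, sub_self] at h1
    exact h1

/-- Permutation representation on tensors. -/
def permRep (k m : ℕ) : Representation ℚ (Equiv.Perm (Fin k)) ((Fin k → Fin m) → ℚ) where
  toFun σ := LinearMap.funLeft ℚ ℚ (fun I : Fin k → Fin m => I ∘ σ)
  map_one' := by ext; simp [LinearMap.funLeft]
  map_mul' σ τ := by
    apply LinearMap.ext
    intro f
    funext I
    rfl

lemma commutant_eq {k m : ℕ} (Y : Matrix (Fin k → Fin m) (Fin k → Fin m) ℚ)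
    (hY : ∀ h : GL (Fin m) ℚ, Y * tpf (fun _ : Fin k => (h : Matrix (Fin m) (Fin m) ℚ)) =
      tpf (fun _ : Fin k => (h : Matrix (Fin m) (Fin m) ℚ)) * Y) :
    ∃ c : Equiv.Perm (Fin k) → ℚ, ∀ I J, Y I J = ∑ σ, c σ * if J = I ∘ σ then 1 else 0 := by
  classical
  let ρ := permRep k m
  let N := ρ.asModule
  let f : Module.End (Module.End (MonoidAlgebra ℚ (Equiv.Perm (Fin k))) N) N :=
    { toFun := fun x => ρ.asModuleEquiv.symm (Y.mulVec (ρ.asModuleEquiv x))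
      map_add' := fun x y => by rw [map_add, Matrix.mulVec_add, map_add]
      map_smul' := by
        intro T x
        let T' : ((Fin k → Fin m) → ℚ) →ₗ[ℚ] ((Fin k → Fin m) → ℚ) :=
          ρ.asModuleEquiv.toLinearMap ∘ₗ (T.restrictScalars ℚ) ∘ₗ ρ.asModuleEquiv.symm.toLinearMap
        have hT' : ∀ x : N, T x = ρ.asModuleEquiv.symm (T' (ρ.asModuleEquiv x)) := fun x => by
          simp [T']
        have hcomm : ∀ σ v, T' (ρ σ v) = ρ σ (T' v) := by
          intro σ v
          simp only [T', LinearMap.comp_apply, LinearEquiv.coe_coe, LinearMap.restrictScalars_apply,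
            Representation.asModuleEquiv_symm_map_rho, map_smul,
            MonoidAlgebra.of_apply]
          exact (Representation.asModuleEquiv_map_smul ρ _ _).trans
            (by rw [Representation.asAlgebraHom_single_one])
        let Z := LinearMap.toMatrix' T'
        have hZ : ∀ (σ : Equiv.Perm (Fin k)) I J, Z (I ∘ σ) (J ∘ σ) = Z I J := by
          intro σ I J
          have h1 := congrFun (hcomm σ (Pi.single (J ∘ σ) 1)) I
          have h2 : ρ σ (Pi.single (J ∘ σ) 1) = Pi.single J 1 := by
            funext K
            change (Pi.single (J ∘ σ) 1 : (Fin k → Fin m) → ℚ) (K ∘ σ) = _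
            simp only [Pi.single_apply]
            congr 1
            exact propext (σ.surjective.injective_comp_right.eq_iff)
          rw [h2] at h1
          simp only [Z, LinearMap.toMatrix'_apply]
          exact h1.symm
        have hc := commute_symm Y hY Z hZ
        have hTZ : ∀ v, T' v = Z.mulVec v := fun v => by
          simp [Z, LinearMap.toMatrix'_mulVec]
        simp only [Module.End.smul_def, RingHom.id_apply]
        rw [hT', hT']
        simp only [LinearEquiv.apply_symm_apply, hTZ, Matrix.mulVec_mulVec, hc] }
  obtain ⟨r, hr⟩ := jacobson_density f
    (Finset.univ.image fun J : Fin k → Fin m => ρ.asModuleEquiv.symm (Pi.single J 1))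
  refine ⟨fun σ => r.coeff σ, fun I J => ?_⟩
  have h1 := hr (ρ.asModuleEquiv.symm (Pi.single J 1)) (by simp)
  have h2 := congrFun (congrArg ρ.asModuleEquiv h1) I
  rw [Representation.asModuleEquiv_map_smul] at h2
  simp only [f, LinearMap.coe_mk, AddHom.coe_mk, LinearEquiv.apply_symm_apply,
    Matrix.mulVec_single_one] at h2
  rw [Representation.asAlgebraHom_def, MonoidAlgebra.lift_apply] at h2
  change Y I J = _ at h2
  rw [h2, Finsupp.sum_fintype _ _ (by simp)]
  simp only [LinearMap.sum_apply, LinearMap.smul_apply, Finset.sum_apply, Pi.smul_apply, smul_eq_mul]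
  refine Finset.sum_congr rfl fun σ _ => ?_
  congr 1
  change (Pi.single J 1 : (Fin k → Fin m) → ℚ) (I ∘ σ) = _
  simp only [Pi.single_apply, eq_comm]

/-- The contraction of a tensor product of (commuting) matrices along a permutation is a
polynomial in traces. -/
lemma trace_perm {F A V : Type*} [Field F] [CommRing A] [Algebra F A] [CommRing V] [Algebra F V]
    {m : ℕ} (π : A →ₐ[F] Matrix (Fin m) (Fin m) V) (S : Subalgebra F V)
    (hS : ∀ a, Matrix.trace (π a) ∈ S) :
    ∀ (k : ℕ) (a : Fin k → A) (τ : Equiv.Perm (Fin k)),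
      ∑ I : Fin k → Fin m, ∏ s, π (a s) (I (τ s)) (I s) ∈ S := by
  intro k
  induction k with
  | zero => intro a τ; simp
  | succ k ih =>
    intro a τ
    obtain ⟨⟨y, e⟩, rfl⟩ := Equiv.Perm.decomposeFin.symm.surjective τ
    rw [← (Fin.consEquiv (fun _ => Fin m)).sum_comp, Fintype.sum_prod_type]
    simp only [Fin.prod_univ_succ, Equiv.Perm.decomposeFin_symm_apply_zero,
      Equiv.Perm.decomposeFin_symm_apply_succ, Fin.consEquiv_apply, Fin.cons_zero, Fin.cons_succ]
    refine Fin.cases ?_ (fun y => ?_) y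
    · simp only [Equiv.swap_self, Equiv.refl_apply, Fin.cons_zero, Fin.cons_succ,
        ← Finset.mul_sum, ← Finset.sum_mul]
      exact S.mul_mem (hS (a 0)) (ih (fun s => a s.succ) e)
    · let t := e.symm y
      have key := ih (Function.update (fun s => a s.succ) t (a 0 * a t.succ)) e
      rw [Finset.sum_comm]
      convert key using 2 with I
      rw [← Finset.mul_prod_erase _ _ (Finset.mem_univ t)]
      rw [Function.update_self, map_mul, Matrix.mul_apply, Finset.sum_mul]
      refine Finset.sum_congr rfl fun i _ => ?_
      rw [← Finset.mul_prod_erase _ _ (Finset.mem_univ t), mul_assoc]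
      have ht : e t = y := e.apply_symm_apply y
      rw [ht]
      simp only [Fin.cons_succ, Equiv.swap_apply_right, Fin.cons_zero]
      congr 2
      refine Finset.prod_congr rfl fun s hs => ?_
      have hst : s ≠ t := (Finset.mem_erase.1 hs).1
      have hes : e s ≠ y := fun h => hst (e.injective (h.trans ht.symm))
      rw [Function.update_of_ne hst, Equiv.swap_apply_of_ne_of_ne (Fin.succ_ne_zero _)
        (fun h => hes (Fin.succ_injective _ h)), Fin.cons_succ]

/-- The entries of the universal representation generate `V`. -/
lemma adjoin_entries {V : Type w} [CommRing V] [Algebra F V]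
    (π : A →ₐ[F] Matrix (Fin n) (Fin n) V) (hπ : IsUniversalRep F A n π) :
    Algebra.adjoin F {x : V | ∃ a i j, x = π a i j} = ⊤ := by
  set S := Algebra.adjoin F {x : V | ∃ a i j, x = π a i j} with hS
  have hmem : ∀ a i j, π a i j ∈ S := fun a i j => Algebra.subset_adjoin ⟨a, i, j, rfl⟩
  let π' : A →ₐ[F] Matrix (Fin n) (Fin n) S :=
    { toFun := fun a => Matrix.of fun i j => ⟨π a i j, hmem a i j⟩
      map_one' := by
        ext i j
        simp only [map_one, Matrix.of_apply, Matrix.one_apply]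
        split_ifs <;> rfl
      map_zero' := by
        ext i j
        simp
      map_add' := fun a b => by
        ext i j
        simp
      map_mul' := fun a b => by
        ext i j
        simp [Matrix.mul_apply]
      commutes' := fun r => by
        ext i j
        simp only [AlgHom.commutes, Matrix.of_apply, Matrix.algebraMap_matrix_apply]
        split_ifs <;> rfl }
  obtain ⟨ρ, hρ⟩ := (hπ S).2 π'
  have h1 : S.val.comp ρ = AlgHom.id F V := by
    apply (hπ V).1
    ext a i j
    have := congrFun (congrFun (DFunLike.congr_fun hρ a) i) j
    exact congrArg S.val this
  rw [eq_top_iff]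
  intro x _
  have := DFunLike.congr_fun h1 x
  change ((ρ x : S) : V) = x at this
  rw [← this]
  exact (ρ x).2

/-- Monomials in the entries. -/
def entryMonomial {V : Type w} [CommRing V] [Algebra F V]
    (π : A →ₐ[F] Matrix (Fin n) (Fin n) V)
    (q : Σ k : ℕ, (Fin k → A) × (Fin k → Fin n) × (Fin k → Fin n)) : V :=
  tpf (fun s => π (q.2.1 s)) q.2.2.1 q.2.2.2

lemma span_monomials {V : Type w} [CommRing V] [Algebra F V]
    (π : A →ₐ[F] Matrix (Fin n) (Fin n) V) (hπ : IsUniversalRep F A n π) (x : V) :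
    x ∈ Submodule.span F (Set.range (entryMonomial F A n π)) := by
  have hx : x ∈ Subalgebra.toSubmodule (Algebra.adjoin F {x : V | ∃ a i j, x = π a i j}) := by
    rw [adjoin_entries F A n π hπ]; trivial
  rw [Algebra.adjoin_eq_span] at hx
  refine Submodule.span_mono ?_ hx
  intro y hy
  induction hy using Submonoid.closure_induction with
  | mem y hy =>
    obtain ⟨a, i, j, rfl⟩ := hy
    exact ⟨⟨1, fun _ => a, fun _ => i, fun _ => j⟩, by simp [entryMonomial, tpf_apply]⟩
  | one => exact ⟨⟨0, Fin.elim0, Fin.elim0, Fin.elim0⟩, by simp [entryMonomial, tpf_apply]⟩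
  | mul y z _ _ hy hz =>
    obtain ⟨⟨k, a, I, J⟩, rfl⟩ := hy
    obtain ⟨⟨l, b, K, L⟩, rfl⟩ := hz
    exact ⟨⟨k + l, Fin.append a b, Fin.append I K, Fin.append J L⟩, by
      simp [entryMonomial, tpf_apply, Fin.prod_univ_add]⟩

/-- The map from rational numbers to `V`. -/
def ratMap (V : Type w) [CommRing V] [Algebra F V] : ℚ →+* V :=
  (algebraMap F V).comp (algebraMap ℚ F)

lemma conj_trace {V : Type w} [CommRing V] [Algebra F V]
    (π : A →ₐ[F] Matrix (Fin n) (Fin n) V)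
    (σ : GL (Fin n) F → (V →ₐ[F] V)) (hσ : IsConjAction F A n π σ)
    {k : ℕ} (a : Fin k → A) (X : Matrix (Fin k → Fin n) (Fin k → Fin n) ℚ) (g : GL (Fin n) ℚ) :
    σ (Matrix.GeneralLinearGroup.map (algebraMap ℚ F) g⁻¹)
      (Matrix.trace (X.map (ratMap F V) * tpf (fun s => π (a s)))) =
    Matrix.trace ((tpf (fun _ : Fin k => (g : Matrix (Fin n) (Fin n) ℚ)) * X *
      tpf (fun _ : Fin k => ((g⁻¹ : GL (Fin n) ℚ) : Matrix (Fin n) (Fin n) ℚ))).map (ratMap F V) *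
      tpf (fun s => π (a s))) := by
  set g' := Matrix.GeneralLinearGroup.map (algebraMap ℚ F) g⁻¹ with hg'
  have e1 : (g' : Matrix (Fin n) (Fin n) F).map (algebraMap F V) =
      ((g⁻¹ : GL (Fin n) ℚ) : Matrix (Fin n) (Fin n) ℚ).map (ratMap F V) := rfl
  have e2 : ((g'⁻¹ : GL (Fin n) F) : Matrix (Fin n) (Fin n) F).map (algebraMap F V) =
      (g : Matrix (Fin n) (Fin n) ℚ).map (ratMap F V) := by
    rw [hg', ← map_inv, inv_inv]; rfl
  have h1 : (tpf (fun s => π (a s))).map (σ g') =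
      (tpf (fun _ : Fin k => ((g⁻¹ : GL (Fin n) ℚ) : Matrix (Fin n) (Fin n) ℚ))).map (ratMap F V) *
      tpf (fun s => π (a s)) *
      (tpf (fun _ : Fin k => (g : Matrix (Fin n) (Fin n) ℚ))).map (ratMap F V) := by
    have := tpf_map (σ g' : V →+* V) (fun s => π (a s))
    refine this.symm.trans ?_
    rw [← tpf_map, ← tpf_map, ← tpf_mul, ← tpf_mul]
    congr 1
    funext s
    rw [← e1, ← e2]
    exact hσ g' (a s)
  have h2 : (X.map (ratMap F V)).map (σ g') = X.map (ratMap F V) := by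
    ext I J
    simp [ratMap]
  have h3 : σ g' (Matrix.trace (X.map (ratMap F V) * tpf (fun s => π (a s)))) =
      Matrix.trace ((X.map (ratMap F V)).map (σ g') * (tpf (fun s => π (a s))).map (σ g')) := by
    rw [← Matrix.map_mul]
    simp only [Matrix.trace, Matrix.diag_apply, map_sum, Matrix.map_apply]
  rw [h3, h2, h1, Matrix.map_mul, Matrix.map_mul]
  simp only [← Matrix.mul_assoc]
  rw [Matrix.trace_mul_comm]
  simp only [← Matrix.mul_assoc]

lemma inv_trace_mem {V : Type w} [CommRing V] [Algebra F V]
    (π : A →ₐ[F] Matrix (Fin n) (Fin n) V) (S : Subalgebra F V)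
    (hS : ∀ a, Matrix.trace (π a) ∈ S)
    {k : ℕ} (a : Fin k → A) (X : Matrix (Fin k → Fin n) (Fin k → Fin n) ℚ)
    (hX : ∀ g : GL (Fin n) ℚ, tpf (fun _ : Fin k => (g : Matrix (Fin n) (Fin n) ℚ)) * X *
      tpf (fun _ : Fin k => ((g⁻¹ : GL (Fin n) ℚ) : Matrix (Fin n) (Fin n) ℚ)) = X) :
    Matrix.trace (X.map (ratMap F V) * tpf (fun s => π (a s))) ∈ S := by
  obtain ⟨c, hc⟩ := commutant_eq X (fun h => by
    conv_lhs => rw [← hX h]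
    rw [Matrix.mul_assoc, ← tpf_mul]
    simp [tpf_one])
  have : Matrix.trace (X.map (ratMap F V) * tpf (fun s => π (a s))) =
      ∑ τ, (algebraMap ℚ F (c τ)) • ∑ I : Fin k → Fin n, ∏ s, π (a s) (I (τ s)) (I s) := by
    simp only [Matrix.trace, Matrix.diag_apply, Matrix.mul_apply, Matrix.map_apply, hc, map_sum,
      map_mul, Finset.sum_mul, Finset.smul_sum]
    rw [Finset.sum_congr rfl fun I _ => Finset.sum_comm, Finset.sum_comm]
    refine Finset.sum_congr rfl fun τ _ => Finset.sum_congr rfl fun I _ => ?_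
    rw [Finset.sum_eq_single (I ∘ τ)]
    · simp [tpf_apply, ratMap, Algebra.smul_def]
    · intro J _ hJ
      simp [hJ]
    · simp
  rw [this]
  exact S.sum_mem fun τ _ => S.smul_mem (trace_perm π S hS k a τ) _

/-- Transpose on the general linear group. -/
def glT {m : ℕ} (g : GL (Fin m) ℚ) : GL (Fin m) ℚ :=
  ⟨(g : Matrix (Fin m) (Fin m) ℚ).transpose, ((g⁻¹ : GL (Fin m) ℚ) : Matrix _ _ ℚ).transpose,
    by rw [← Matrix.transpose_mul]; simp, by rw [← Matrix.transpose_mul]; simp⟩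

lemma reynolds_matrix {m : ℕ} {Q : Type*} [Fintype Q] (k : Q → ℕ)
    (x : (q : Q) → Matrix (Fin (k q) → Fin m) (Fin (k q) → Fin m) ℚ) :
    ∃ r : (q : Q) → Matrix (Fin (k q) → Fin m) (Fin (k q) → Fin m) ℚ,
      (∀ (g : GL (Fin m) ℚ) q, tpf (fun _ : Fin (k q) => (g : Matrix (Fin m) (Fin m) ℚ)) * r q *
        tpf (fun _ => ((g⁻¹ : GL (Fin m) ℚ) : Matrix (Fin m) (Fin m) ℚ)) = r q) ∧
      x - r ∈ Submodule.span ℚ (Set.range fun g : GL (Fin m) ℚ =>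
        (fun q => tpf (fun _ : Fin (k q) => (g : Matrix (Fin m) (Fin m) ℚ)) * x q *
        tpf (fun _ => ((g⁻¹ : GL (Fin m) ℚ) : Matrix (Fin m) (Fin m) ℚ))) - x) := by
  let B : LinearMap.BilinForm ℚ
      ((q : Q) → Matrix (Fin (k q) → Fin m) (Fin (k q) → Fin m) ℚ) := LinearMap.mk₂ ℚ
    (fun x y => ∑ q, Matrix.trace ((x q).transpose * y q))
    (by intros; simp [Matrix.add_mul, Finset.sum_add_distrib])
    (by intros; simp [Finset.mul_sum])
    (by intros; simp [Matrix.mul_add, Finset.sum_add_distrib])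
    (by intros; simp [Finset.mul_sum])
  have hB : ∀ x y, B x y = ∑ q, Matrix.trace ((x q).transpose * y q) := fun _ _ => rfl
  let ρ : GL (Fin m) ℚ →
      ((q : Q) → Matrix (Fin (k q) → Fin m) (Fin (k q) → Fin m) ℚ) →ₗ[ℚ]
      ((q : Q) → Matrix (Fin (k q) → Fin m) (Fin (k q) → Fin m) ℚ) := fun g =>
    { toFun := fun x q => tpf (fun _ : Fin (k q) => (g : Matrix (Fin m) (Fin m) ℚ)) * x q *
        tpf (fun _ => ((g⁻¹ : GL (Fin m) ℚ) : Matrix (Fin m) (Fin m) ℚ))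
      map_add' := fun x y => by funext q; simp [Matrix.mul_add, Matrix.add_mul]
      map_smul' := fun c x => by funext q; simp }
  have hsym : ∀ x y, B x y = B y x := by
    intro x y
    rw [hB, hB]
    refine Finset.sum_congr rfl fun q _ => ?_
    rw [← Matrix.trace_transpose, Matrix.transpose_mul, Matrix.transpose_transpose]
  have hpos : ∀ x, B x x = 0 → x = 0 := by
    intro x hx
    rw [hB] at hx
    have hnn : ∀ q, Matrix.trace ((x q).transpose * x q) =
        ∑ J, ∑ I, x q I J * x q I J := fun q => by
      simp [Matrix.trace, Matrix.mul_apply]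
    simp only [hnn] at hx
    rw [Finset.sum_eq_zero_iff_of_nonneg (fun q _ => Finset.sum_nonneg fun J _ =>
      Finset.sum_nonneg fun I _ => mul_self_nonneg _)] at hx
    funext q
    ext I J
    have h1 := hx q (Finset.mem_univ q)
    rw [Finset.sum_eq_zero_iff_of_nonneg (fun J _ =>
      Finset.sum_nonneg fun I _ => mul_self_nonneg _)] at h1
    have h2 := h1 J (Finset.mem_univ J)
    rw [Finset.sum_eq_zero_iff_of_nonneg (fun I _ => mul_self_nonneg _)] at h2
    exact mul_self_eq_zero.1 (h2 I (Finset.mem_univ I))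
  have hmul : ∀ g h x, ρ (g * h) x = ρ g (ρ h x) := by
    intro g h x
    funext q
    simp only [ρ, LinearMap.coe_mk, AddHom.coe_mk, mul_inv_rev, Units.val_mul, tpf_mul,
      Matrix.mul_assoc]
  have hadj : ∀ g x y, B (ρ g x) y = B x (ρ (glT g) y) := by
    intro g x y
    rw [hB, hB]
    refine Finset.sum_congr rfl fun q _ => ?_
    have e1 : tpf (fun _ : Fin (k q) => ((glT g : GL (Fin m) ℚ) : Matrix (Fin m) (Fin m) ℚ)) =
      (tpf (fun _ : Fin (k q) => (g : Matrix (Fin m) (Fin m) ℚ))).transpose := rfl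
    have e2 : tpf (fun _ : Fin (k q) => (((glT g)⁻¹ : GL (Fin m) ℚ) : Matrix (Fin m) (Fin m) ℚ)) =
      (tpf (fun _ : Fin (k q) => ((g⁻¹ : GL (Fin m) ℚ) : Matrix (Fin m) (Fin m) ℚ))).transpose := rfl
    simp only [ρ, LinearMap.coe_mk, AddHom.coe_mk, e1, e2, Matrix.transpose_mul]
    rw [Matrix.mul_assoc, Matrix.trace_mul_comm]
    simp only [Matrix.mul_assoc]
  obtain ⟨r, hr, hxr⟩ := reynolds B hsym hpos ρ hmul glT hadj x
  exact ⟨r, fun g q => congrFun (hr g) q, hxr⟩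

/-- **Invariants are generated by traces (char 0).** Over a field `F` of characteristic
zero, if `(V, π)` is the universal `n`-dimensional representation of the commutative
`F`-algebra `A` and `GL_n(F)` acts on `V` via conjugation of `π`, then the invariant
subalgebra `V^{GL_n(F)}` is generated as an `F`-algebra by the traces `tr (π a)`, `a ∈ A`. -/
theorem invariants_generated_by_traces (V : Type w) [CommRing V] [Algebra F V]
    (π : A →ₐ[F] Matrix (Fin n) (Fin n) V) (hπ : IsUniversalRep F A n π)
    (σ : GL (Fin n) F → (V →ₐ[F] V)) (hσ : IsConjAction F A n π σ) :
    Algebra.adjoin F {x : V | ∃ a : A, x = Matrix.trace (π a)} = fixedSubalgebra F σ := by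
  classical
  set S := Algebra.adjoin F {x : V | ∃ a : A, x = Matrix.trace (π a)} with hSdef
  have hS : ∀ a, Matrix.trace (π a) ∈ S := fun a => Algebra.subset_adjoin ⟨a, rfl⟩
  apply le_antisymm
  · rw [hSdef, Algebra.adjoin_le_iff]
    rintro _ ⟨a, rfl⟩ g
    have h1 : σ g (Matrix.trace (π a)) = Matrix.trace ((AlgHom.mapMatrix (σ g)) (π a)) := by
      simp [Matrix.trace]
    rw [h1, hσ g a, Matrix.trace_mul_comm, ← Matrix.mul_assoc, ← Matrix.map_mul,
      ← Units.val_mul, inv_mul_cancel]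
    simp
  · intro v hv
    change ∀ g, σ g v = v at hv
    obtain ⟨c, hc⟩ := Finsupp.mem_span_range_iff_exists_finsupp.1 (span_monomials F A n π hπ v)
    let Q := c.support
    let k : Q → ℕ := fun q => q.1.1
    let Φ : ((q : Q) → Matrix (Fin (k q) → Fin n) (Fin (k q) → Fin n) ℚ) → V := fun x =>
      ∑ q : Q, c q.1 • Matrix.trace ((x q).map (ratMap F V) * tpf (fun s => π (q.1.2.1 s)))
    have Φ_add : ∀ x y, Φ (x + y) = Φ x + Φ y := by
      intro x y
      simp only [Φ, ← Finset.sum_add_distrib, ← smul_add, ← Matrix.trace_add, ← Matrix.add_mul]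
      simp only [Pi.add_apply, Matrix.map_add _ (map_add (ratMap F V))]
    have Φ_smul : ∀ (r : ℚ) x, Φ (r • x) = ratMap F V r * Φ x := by
      intro r x
      simp only [Φ, Finset.mul_sum, mul_smul_comm]
      refine Finset.sum_congr rfl fun q _ => ?_
      congr 1
      rw [← smul_eq_mul (ratMap F V r), ← Matrix.trace_smul, ← Matrix.smul_mul]
      congr 2
      ext I J
      simp
    have Φ_sub : ∀ x y, Φ (x - y) = Φ x - Φ y := by
      intro x y
      rw [eq_sub_iff_add_eq, ← Φ_add, sub_add_cancel]
    let x : (q : Q) → Matrix (Fin (k q) → Fin n) (Fin (k q) → Fin n) ℚ :=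
      fun q => Matrix.single q.1.2.2.2 q.1.2.2.1 1
    have hx : Φ x = v := by
      rw [← hc, Finsupp.sum, ← Finset.sum_coe_sort]
      refine Finset.sum_congr rfl fun q _ => ?_
      congr 1
      have : (x q).map (ratMap F V) = Matrix.single q.1.2.2.2 q.1.2.2.1 1 := by
        ext I J
        simp only [x, Matrix.map_apply, Matrix.single_apply]
        split_ifs <;> simp
      rw [this, Matrix.trace_single_mul]
      simp [entryMonomial]
    obtain ⟨r, hr, hxr⟩ := reynolds_matrix k x
    have hzero : ∀ d ∈ Submodule.span ℚ (Set.range fun g : GL (Fin n) ℚ =>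
        (fun q => tpf (fun _ : Fin (k q) => (g : Matrix (Fin n) (Fin n) ℚ)) * x q *
        tpf (fun _ => ((g⁻¹ : GL (Fin n) ℚ) : Matrix (Fin n) (Fin n) ℚ))) - x), Φ d = 0 := by
      intro d hd
      induction hd using Submodule.span_induction with
      | mem d hd =>
        obtain ⟨g, rfl⟩ := hd
        simp only [Φ_sub]
        rw [sub_eq_zero, hx]
        conv_rhs => rw [← hv (Matrix.GeneralLinearGroup.map (algebraMap ℚ F) g⁻¹), ← hx]
        simp only [Φ, map_sum, map_smul]
        refine Finset.sum_congr rfl fun q _ => ?_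
        rw [conj_trace F A n π σ hσ]
      | zero => simpa using Φ_smul 0 0
      | add a b _ _ ha hb => rw [Φ_add, ha, hb, add_zero]
      | smul t a _ ha => rw [Φ_smul, ha, mul_zero]
    have hvr : v = Φ r := by
      have := hzero _ hxr
      rw [Φ_sub, hx, sub_eq_zero] at this
      exact this
    rw [hvr]
    exact S.sum_mem fun q _ => S.smul_mem
      (inv_trace_mem F A n π S hS q.1.2.1 (r q) (fun g => hr g q)) _

end SymmetricProduct
end

section
/- Let F be a commutative ring, A a commutative F-algebra that is flat as an F-module, and n a natural number. Let γ_n : A → TS^n_F(A) be the polynomial law whose component at each commutative F-algebra L sends x ∈ L ⊗_F A to its n-th power tensor x^{⊗n} ∈ (L ⊗_F A)^{⊗_L n} ≅ L ⊗_F A^{⊗n}, which lies in L ⊗_F TS^n_F(A). Then for every commutative F-algebra B, the map from AlgHom_F(TS^n_F(A), B) to the set of multiplicative polynomial laws A → B that are homogeneous of degree n, sending ρ to the polynomial law ρ ∘ γ_n, is a bijection. -/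
open scoped TensorProduct
open PiTensorProduct

universe u v w

set_option synthInstance.maxHeartbeats 1000000
set_option maxHeartbeats 1600000

namespace SymmetricProduct

variable (F : Type u) [CommRing F] (A : Type v) [CommRing A] [Algebra F A] (n : ℕ)

/-- The algebra homomorphism on the `n`-fold tensor power permuting factors by `σ`. -/
noncomputable def permHom (σ : Equiv.Perm (Fin n)) :
    (⨂[F] _ : Fin n, A) →ₐ[F] (⨂[F] _ : Fin n, A) :=
  PiTensorProduct.liftAlgHom (MultilinearMap.domDomCongr σ (PiTensorProduct.tprod F))
    (by simp [MultilinearMap.domDomCongr_apply]; rfl)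
    (fun x y => by
      simp only [MultilinearMap.domDomCongr_apply]
      rw [tprod_mul_tprod]; rfl)

@[simp] lemma permHom_tprod (σ : Equiv.Perm (Fin n)) (x : Fin n → A) :
    permHom F A n σ (tprod F x) = tprod F (fun i => x (σ i)) := by
  simp [permHom]

/-- `TS^n_F(A)`: the subalgebra of symmetric tensors in the `n`-fold tensor power of `A`. -/
noncomputable def TS : Subalgebra F (⨂[F] _ : Fin n, A) where
  carrier := {x | ∀ σ : Equiv.Perm (Fin n), permHom F A n σ x = x}
  mul_mem' := fun hx hy σ => by rw [_root_.map_mul, hx σ, hy σ]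
  add_mem' := fun hx hy σ => by rw [_root_.map_add, hx σ, hy σ]
  one_mem' := fun σ => map_one _
  algebraMap_mem' := fun r σ => AlgHom.commutes _ r

/-- `e_i^n(a)`: the sum over `i`-element subsets `S` of `Fin n` of the elementary tensors
having `a` in the slots of `S` and `1` elsewhere. -/
noncomputable def esym (i : ℕ) (a : A) : ⨂[F] _ : Fin n, A :=
  ∑ S ∈ Finset.powersetCard i (Finset.univ : Finset (Fin n)),
    tprod F (fun j => if j ∈ S then a else 1)

lemma esym_mem (i : ℕ) (a : A) : esym F A n i a ∈ TS F A n := by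
  intro σ
  rw [esym, map_sum]
  simp only [permHom_tprod]
  refine Finset.sum_nbij' (fun S => S.map σ.symm.toEmbedding)
    (fun S => S.map σ.toEmbedding) ?_ ?_ ?_ ?_ ?_
  · intro S hS
    simp only [Finset.mem_powersetCard_univ, Finset.card_map] at hS ⊢
    exact hS
  · intro S hS
    simp only [Finset.mem_powersetCard_univ, Finset.card_map] at hS ⊢
    exact hS
  · intro S hS
    ext j
    simp
  · intro S hS
    ext j
    simp
  · intro S hS
    congr 1
    funext j
    have hiff : (σ j ∈ S) ↔ (j ∈ Finset.map σ.symm.toEmbedding S) := by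
      constructor
      · intro h
        exact Finset.mem_map.2 ⟨σ j, h, σ.symm_apply_apply j⟩
      · intro h
        obtain ⟨s, hs, rfl⟩ := Finset.mem_map.1 h
        simpa using hs
    simp only [hiff]

/-- `e_i^n(a)` as an element of `TS^n_F(A)`. -/
noncomputable def esymT (i : ℕ) (a : A) : TS F A n := ⟨esym F A n i a, esym_mem F A n i a⟩

lemma tprod_const_mem (a : A) : (tprod F (fun _ : Fin n => a)) ∈ TS F A n := fun σ => by
  simp

/-- `a^{⊗ n}` as an element of `TS^n_F(A)`. -/
noncomputable def tpow (a : A) : TS F A n := ⟨tprod F (fun _ : Fin n => a), tprod_const_mem F A n a⟩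


/-- A family of maps `L ⊗ M → L ⊗ N`, indexed by the commutative `F`-algebras `L`, is a
polynomial law when it is natural in `L`, i.e. commutes with base change along every
`F`-algebra homomorphism. -/
def IsPolyLaw (M : Type v) [AddCommMonoid M] [Module F M]
    (N : Type w) [AddCommMonoid N] [Module F N]
    (φ : ∀ (L : Type u) [CommRing L] [Algebra F L], L ⊗[F] M → L ⊗[F] N) : Prop :=
  ∀ (L L' : Type u) [CommRing L] [Algebra F L] [CommRing L'] [Algebra F L']
    (f : L →ₐ[F] L') (x : L ⊗[F] M),
      φ L' (LinearMap.rTensor M f.toLinearMap x) = LinearMap.rTensor N f.toLinearMap (φ L x)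

/-- A family of maps `L ⊗ M → L ⊗ N` is homogeneous of degree `m` if
`φ_L (c • x) = c^m • φ_L x` for every `L`, `c ∈ L` and `x ∈ L ⊗ M`. -/
def IsHomogeneousLaw (M : Type v) [AddCommMonoid M] [Module F M]
    (N : Type w) [AddCommMonoid N] [Module F N] (m : ℕ)
    (φ : ∀ (L : Type u) [CommRing L] [Algebra F L], L ⊗[F] M → L ⊗[F] N) : Prop :=
  ∀ (L : Type u) [CommRing L] [Algebra F L] (c : L) (x : L ⊗[F] M),
    φ L (c • x) = c ^ m • φ L x

/-- A family of maps `L ⊗ M → L ⊗ N` between algebras is multiplicative if each component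
preserves products and units. -/
def IsMultiplicativeLaw (M : Type v) [CommRing M] [Algebra F M]
    (N : Type w) [CommRing N] [Algebra F N]
    (φ : ∀ (L : Type u) [CommRing L] [Algebra F L], L ⊗[F] M → L ⊗[F] N) : Prop :=
  ∀ (L : Type u) [CommRing L] [Algebra F L],
    (∀ x y : L ⊗[F] M, φ L (x * y) = φ L x * φ L y) ∧ φ L (1 : L ⊗[F] M) = 1

/-- The `L`-component of the `n`-th power polynomial law with values in the full tensor
power: `x ↦ x^{⊗n}`, realized inside `L ⊗ A^{⊗n}` as the product over the `n` slots of the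
images of `x` under the slot inclusions `A → A^{⊗n}` (on a pure tensor `c ⊗ a` it gives
`c^n ⊗ (a ⊗ ⋯ ⊗ a)`). -/
noncomputable def gammaFull (L : Type u) [CommRing L] [Algebra F L] (x : L ⊗[F] A) :
    L ⊗[F] (⨂[F] _ : Fin n, A) :=
  ∏ i : Fin n,
    Algebra.TensorProduct.map (AlgHom.id F L)
      (PiTensorProduct.singleAlgHom (R := F) (A := fun _ : Fin n => A) i) x

/-- Composition of an algebra homomorphism `ρ : TS^n_F(A) → B` with a
`TS^n_F(A)`-valued polynomial law `γ`, giving a polynomial law `A → B`. -/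
noncomputable def compGamma
    (γ : ∀ (L : Type u) [CommRing L] [Algebra F L], L ⊗[F] A → L ⊗[F] ↥(TS F A n))
    (B : Type w) [CommRing B] [Algebra F B] (ρ : TS F A n →ₐ[F] B) :
    ∀ (L : Type u) [CommRing L] [Algebra F L], L ⊗[F] A → L ⊗[F] B :=
  fun L _ _ x => Algebra.TensorProduct.map (AlgHom.id F L) ρ (γ L x)


end SymmetricProduct

namespace SymmetricProduct

section Gamma

variable {F : Type*} [CommRing F] {A : Type*} [CommRing A] [Algebra F A] (n : ℕ)
  {A' : Type*} [CommRing A'] [Algebra F A']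
  {L : Type*} [CommRing L] [Algebra F L] {L' : Type*} [CommRing L'] [Algebra F L']

/-- Universe polymorphic version of `gammaFull`. -/
noncomputable def gF (x : L ⊗[F] A) : L ⊗[F] (⨂[F] _ : Fin n, A) :=
  ∏ i : Fin n,
    Algebra.TensorProduct.map (AlgHom.id F L)
      (PiTensorProduct.singleAlgHom (R := F) (A := fun _ : Fin n => A) i) x

lemma gF_mul (x y : L ⊗[F] A) : gF n (x * y) = gF n x * gF n y := by
  simp [gF, Finset.prod_mul_distrib]

lemma gF_one : gF n (1 : L ⊗[F] A) = 1 := by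
  simp [gF]

lemma gF_smul (c : L) (x : L ⊗[F] A) : gF n (c • x) = c ^ n • gF n x := by
  have h : ∀ i : Fin n, Algebra.TensorProduct.map (AlgHom.id F L)
      (PiTensorProduct.singleAlgHom (R := F) (A := fun _ : Fin n => A) i) (c • x)
      = c • Algebra.TensorProduct.map (AlgHom.id F L)
      (PiTensorProduct.singleAlgHom (R := F) (A := fun _ : Fin n => A) i) x := by
    intro i
    induction x with
    | zero => simp
    | tmul a b => simp [TensorProduct.smul_tmul']
    | add x y hx hy => rw [smul_add, map_add, hx, hy, map_add, smul_add]
  simp only [gF, h, Finset.prod_smul]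
  simp

lemma prod_single (a : Fin n → A) :
    ∏ i : Fin n, PiTensorProduct.singleAlgHom (R := F) (A := fun _ : Fin n => A) i (a i)
      = tprod F a := by
  have : ∀ i, PiTensorProduct.singleAlgHom (R := F) (A := fun _ : Fin n => A) i (a i)
      = PiTensorProduct.tprod F (Pi.mulSingle (M := fun _ : Fin n => A) i (a i)) := fun i => rfl
  simp only [this]
  refine (PiTensorProduct.tprod_prod (R := F) (A := fun _ : Fin n => A) Finset.univ
    (fun i => Pi.mulSingle i (a i))).symm.trans ?_
  congr 1
  exact Finset.univ_prod_mulSingle a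

lemma prod_tmul (l : Fin n → L) {R : Type*} [CommRing R] [Algebra F R] (y : Fin n → R) :
    ∏ i : Fin n, (l i ⊗ₜ[F] y i) = (∏ i, l i) ⊗ₜ[F] (∏ i, y i) := by
  have : ∀ s : Finset (Fin n), ∏ i ∈ s, (l i ⊗ₜ[F] y i) = (∏ i ∈ s, l i) ⊗ₜ[F] (∏ i ∈ s, y i) := by
    classical
    intro s
    induction s using Finset.induction_on with
    | empty => simp [Algebra.TensorProduct.one_def]
    | insert a s ha ih =>
      rw [Finset.prod_insert ha, Finset.prod_insert ha, Finset.prod_insert ha, ih,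
        Algebra.TensorProduct.tmul_mul_tmul]
  exact this _

lemma gF_sum {J : Type*} (s : Finset J) (l : J → L) (a : J → A) :
    gF n (∑ j ∈ s, l j ⊗ₜ[F] a j) = ∑ f ∈ Fintype.piFinset (fun _ : Fin n => s),
      (∏ i, l (f i)) ⊗ₜ[F] tprod F (fun i => a (f i)) := by
  classical
  simp only [gF, map_sum, Algebra.TensorProduct.map_tmul, AlgHom.id_apply]
  rw [Finset.prod_univ_sum]
  refine Finset.sum_congr rfl fun f _ => ?_
  rw [prod_tmul, prod_single]

lemma exists_sum (x : L ⊗[F] A) : ∃ (s : Finset (L × A)), x = ∑ j ∈ s, j.1 ⊗ₜ[F] j.2 :=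
  TensorProduct.exists_finset x

lemma gF_lTensor (g : A →ₗ[F] A') (x : L ⊗[F] A) :
    LinearMap.lTensor L (PiTensorProduct.map (fun _ : Fin n => g)) (gF n x)
      = gF n (LinearMap.lTensor L g x) := by
  obtain ⟨s, rfl⟩ := exists_sum x
  simp only [map_sum, LinearMap.lTensor_tmul]
  rw [gF_sum, gF_sum]
  simp only [map_sum, LinearMap.lTensor_tmul, PiTensorProduct.map_tprod]

lemma gF_rTensor (h : L →ₐ[F] L') (x : L ⊗[F] A) :
    LinearMap.rTensor _ h.toLinearMap (gF n x) = gF n (LinearMap.rTensor A h.toLinearMap x) := by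
  obtain ⟨s, rfl⟩ := exists_sum x
  simp only [map_sum, LinearMap.rTensor_tmul]
  rw [gF_sum, gF_sum]
  simp only [map_sum, LinearMap.rTensor_tmul, AlgHom.toLinearMap_apply, map_prod]

end Gamma

section Count

open Classical

variable {I : Type*} (n : ℕ)

/-- The multiplicity function of a tuple. -/
noncomputable def cnt (f : Fin n → I) : I →₀ ℕ := ∑ i, Finsupp.single (f i) 1

lemma cnt_apply (f : Fin n → I) (a : I) : cnt n f a = (Finset.univ.filter (fun i => f i = a)).card := by
  simp [cnt, Finsupp.finsetSum_apply, Finsupp.single_apply]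

lemma cnt_perm (f : Fin n → I) (σ : Equiv.Perm (Fin n)) : cnt n (fun i => f (σ i)) = cnt n f :=
  Equiv.sum_comp σ (fun i => Finsupp.single (f i) 1)

lemma exists_perm {f f' : Fin n → I} (h : cnt n f = cnt n f') :
    ∃ σ : Equiv.Perm (Fin n), f' = fun i => f (σ i) := by
  have key : ∀ a, Nonempty ({i // f' i = a} ≃ {i // f i = a}) := by
    intro a
    refine ⟨Fintype.equivOfCardEq ?_⟩
    rw [Fintype.card_subtype, Fintype.card_subtype, ← cnt_apply, ← cnt_apply, h]
  let e := fun a => (key a).some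
  refine ⟨(Equiv.sigmaFiberEquiv f').symm.trans ((Equiv.sigmaCongrRight fun a => (e a)).trans
    (Equiv.sigmaFiberEquiv f)), ?_⟩
  funext i
  simp [Equiv.sigmaFiberEquiv]
  exact ((e (f' i)) ⟨i, rfl⟩).2.symm

lemma mem_support_cnt (f : Fin n → I) (i : Fin n) : f i ∈ (cnt n f).support := by
  rw [Finsupp.mem_support_iff, cnt_apply]
  exact (Finset.card_pos.2 ⟨i, by simp⟩).ne'

lemma support_cnt_subset (f : Fin n → I) (J : Finset I) (hf : ∀ i, f i ∈ J) :
    (cnt n f).support ⊆ J := by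
  intro a ha
  rw [Finsupp.mem_support_iff, cnt_apply] at ha
  obtain ⟨i, hi⟩ := Finset.card_pos.1 (Nat.pos_of_ne_zero ha)
  simp at hi
  exact hi ▸ hf i

lemma degree_cnt (f : Fin n → I) : (cnt n f).degree = n := by
  simp [cnt, map_sum]

lemma sum_get (l : List I) : ∑ i : Fin l.length, ({l.get i} : Multiset I) = (l : Multiset I) := by
  induction l with
  | nil => simp
  | cons a l ih =>
    rw [← Multiset.cons_coe, ← ih, ← Multiset.singleton_add]
    exact Fin.sum_univ_succ _

lemma exists_cnt (d : I →₀ ℕ) (hd : d.degree = n) : ∃ f, cnt n f = d := by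
  have hc : (Finsupp.toMultiset d).toList.length = n := by
    rw [Multiset.length_toList, Finsupp.card_toMultiset, ← hd]; rfl
  subst hc
  refine ⟨fun i => (Finsupp.toMultiset d).toList.get i, ?_⟩
  apply Multiset.toFinsupp.symm.injective
  change Finsupp.toMultiset _ = Finsupp.toMultiset _
  rw [cnt, map_sum]
  simp only [Finsupp.toMultiset_single, one_smul]
  rw [sum_get, Multiset.coe_toList]

lemma prod_cnt {L : Type*} [CommRing L] (l : I → L) (f : Fin n → I) :
    ∏ i, l (f i) = (cnt n f).prod (fun a k => l a ^ k) := by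
  unfold cnt
  rw [← Finsupp.prod_finsetSum_index (by simp) (by intros; rw [pow_add])]
  simp

variable (I) in
/-- Multi-indices of degree `n`. -/
abbrev D : Type _ := {d : I →₀ ℕ // d.degree = n}

/-- The multi-index of a tuple. -/
noncomputable def cD (f : Fin n → I) : D I n := ⟨cnt n f, degree_cnt n f⟩

/-- A tuple with given multi-index. -/
noncomputable def rep (d : D I n) : Fin n → I := (exists_cnt n d.1 d.2).choose

lemma cD_rep (d : D I n) : cD n (rep n d) = d :=
  Subtype.ext (exists_cnt n d.1 d.2).choose_spec

/-- All tuples with given multi-index. -/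
noncomputable def fib (d : D I n) : Finset (Fin n → I) :=
  (Fintype.piFinset (fun _ : Fin n => d.1.support)).filter (fun f => cD n f = d)

lemma mem_fib (d : D I n) (f : Fin n → I) : f ∈ fib n d ↔ cD n f = d := by
  simp only [fib, Finset.mem_filter, Fintype.mem_piFinset, and_iff_right_iff_imp]
  rintro rfl i
  exact mem_support_cnt n f i

end Count

section Free

open Classical

variable {F : Type*} [CommRing F] {I : Type*} (n : ℕ) {M : Type*} [CommRing M] [Algebra F M]
  {L : Type*} [CommRing L] [Algebra F L]

variable (F) in
/-- The orbit sum map. -/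
noncomputable def q (x : I → M) : (D I n →₀ F) →ₗ[F] (⨂[F] _ : Fin n, M) :=
  Finsupp.linearCombination F (fun d => ∑ f ∈ fib n d, tprod F (fun i => x (f i)))

lemma q_single (x : I → M) (d : D I n) :
    q F n x (Finsupp.single d 1) = ∑ f ∈ fib n d, tprod F (fun i => x (f i)) := by
  simp [q]

/-- The monomial attached to a multi-index. -/
noncomputable def mono (l : I → L) (d : D I n) : L := d.1.prod (fun a k => l a ^ k)

/-- The multi-indices supported in `J`. -/
noncomputable def Dset (J : Finset I) : Finset (D I n) :=
  (Fintype.piFinset (fun _ : Fin n => J)).image (cD n)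

lemma mem_Dset (J : Finset I) (d : D I n) : d ∈ Dset n J ↔ d.1.support ⊆ J := by
  simp only [Dset, Finset.mem_image, Fintype.mem_piFinset]
  constructor
  · rintro ⟨f, hf, rfl⟩
    exact support_cnt_subset n f J hf
  · intro h
    refine ⟨rep n d, fun i => h ?_, cD_rep n d⟩
    have := mem_support_cnt n (rep n d) i
    have h2 : cnt n (rep n d) = d.1 := congrArg Subtype.val (cD_rep n d)
    rwa [h2] at this

variable (F) in
/-- The universal power. -/
noncomputable def cc (J : Finset I) (l : I → L) : L ⊗[F] (D I n →₀ F) :=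
  ∑ d ∈ Dset n J, mono n l d ⊗ₜ[F] Finsupp.single d 1

lemma gF_eq (J : Finset I) (l : I → L) (x : I → M) :
    gF n (∑ a ∈ J, l a ⊗ₜ[F] x a) = LinearMap.lTensor L (q F n x) (cc F n J l) := by
  rw [gF_sum, cc, map_sum]
  simp only [LinearMap.lTensor_tmul, q_single]
  rw [← Finset.sum_fiberwise_of_maps_to (t := Dset n J) (g := cD n)
    (fun f hf => Finset.mem_image_of_mem _ hf)]
  refine Finset.sum_congr rfl fun d hd => ?_
  rw [TensorProduct.tmul_sum]
  have hfil : (Fintype.piFinset (fun _ : Fin n => J)).filter (fun f => cD n f = d) = fib n d := by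
    ext f
    rw [mem_fib, Finset.mem_filter, and_iff_right_iff_imp]
    rintro rfl
    rw [Fintype.mem_piFinset]
    intro i
    exact (mem_Dset n J _).1 hd (mem_support_cnt n f i)
  rw [hfil]
  refine Finset.sum_congr rfl fun f hf => ?_
  rw [mem_fib] at hf
  subst hf
  rw [prod_cnt]
  rfl

lemma perm_q (x : I → M) (s : D I n →₀ F) (σ : Equiv.Perm (Fin n)) :
    permHom F M n σ (q F n x s) = q F n x s := by
  suffices h : (permHom F M n σ).toLinearMap ∘ₗ q F n x = q F n x from
    LinearMap.congr_fun h s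
  refine Finsupp.lhom_ext' fun d => LinearMap.ext_ring ?_
  simp only [LinearMap.comp_apply, Finsupp.lsingle_apply, q_single, AlgHom.toLinearMap_apply,
    map_sum, permHom_tprod]
  refine Finset.sum_nbij' (fun f i => f (σ i)) (fun f i => f (σ.symm i)) ?_ ?_ ?_ ?_ ?_
  · intro f hf
    rw [mem_fib] at hf ⊢
    rw [← hf]
    exact Subtype.ext (cnt_perm n f σ)
  · intro f hf
    rw [mem_fib] at hf ⊢
    rw [← hf]
    exact Subtype.ext (cnt_perm n f σ.symm)
  · intro f _; simp
  · intro f _; simp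
  · intro f _; rfl

variable (b : Module.Basis I F M)

/-- Basis of the tensor power. -/
noncomputable def tb : Module.Basis (Fin n → I) F (⨂[F] _ : Fin n, M) :=
  Basis.piTensorProduct (fun _ => b)

lemma tb_apply (f : Fin n → I) : tb n b f = tprod F (fun i => b (f i)) := by
  simp [tb, Basis.piTensorProduct_apply]

/-- The retraction of the orbit sum map. -/
noncomputable def rS : (⨂[F] _ : Fin n, M) →ₗ[F] (D I n →₀ F) :=
  (tb n b).constr F (fun f => if f = rep n (cD n f) then Finsupp.single (cD n f) 1 else 0)

lemma repr_q (s : D I n →₀ F) (f : Fin n → I) :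
    (tb n b).repr (q F n b s) f = s (cD n f) := by
  suffices h : (Finsupp.lapply f) ∘ₗ (tb n b).repr.toLinearMap ∘ₗ q F n b
      = Finsupp.lapply (R := F) (cD n f) from LinearMap.congr_fun h s
  refine Finsupp.lhom_ext' fun d => LinearMap.ext_ring ?_
  simp only [LinearMap.comp_apply, Finsupp.lsingle_apply, q_single, ← tb_apply, map_sum,
    LinearEquiv.coe_coe, Module.Basis.repr_self, Finsupp.lapply_apply, Finsupp.single_apply]
  rw [Finset.sum_ite_eq']
  simp [mem_fib, eq_comm]

lemma rS_apply (t : ⨂[F] _ : Fin n, M) (d : D I n) :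
    rS n b t d = (tb n b).repr t (rep n d) := by
  suffices h : (Finsupp.lapply d) ∘ₗ rS n b
      = Finsupp.lapply (R := F) (rep n d) ∘ₗ (tb n b).repr.toLinearMap from LinearMap.congr_fun h t
  refine (tb n b).ext fun f => ?_
  simp only [LinearMap.comp_apply, rS, Module.Basis.constr_basis,
    LinearEquiv.coe_coe, Module.Basis.repr_self, Finsupp.lapply_apply, Finsupp.single_apply]
  by_cases h : f = rep n d
  · subst h
    simp [cD_rep]
  · rw [if_neg h]
    split_ifs with h1
    · rw [Finsupp.single_apply, if_neg]
      rintro rfl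
      exact h h1
    · rfl

lemma rS_q (s : D I n →₀ F) : rS n b (q F n b s) = s := by
  ext d
  rw [rS_apply, repr_q, cD_rep]

lemma repr_perm (t : ⨂[F] _ : Fin n, M) (σ : Equiv.Perm (Fin n)) (f : Fin n → I) :
    (tb n b).repr (permHom F M n σ t) (fun i => f (σ i)) = (tb n b).repr t f := by
  suffices h : (Finsupp.lapply (fun i => f (σ i))) ∘ₗ (tb n b).repr.toLinearMap ∘ₗ
      (permHom F M n σ).toLinearMap
      = Finsupp.lapply (R := F) f ∘ₗ (tb n b).repr.toLinearMap from LinearMap.congr_fun h t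
  refine (tb n b).ext fun f' => ?_
  simp only [LinearMap.comp_apply, AlgHom.toLinearMap_apply]
  rw [tb_apply, permHom_tprod, ← tb_apply n b f', ← tb_apply n b (fun i => f' (σ i))]
  simp only [LinearEquiv.coe_coe, Module.Basis.repr_self, Finsupp.lapply_apply,
    Finsupp.single_apply]
  congr 1
  apply propext
  constructor
  · intro h
    funext i
    simpa using congrFun h (σ.symm i)
  · rintro rfl; rfl

lemma q_rS (t : ⨂[F] _ : Fin n, M) (ht : ∀ σ, permHom F M n σ t = t) :
    q F n b (rS n b t) = t := by
  apply (tb n b).repr.injective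
  ext f
  rw [repr_q, rS_apply]
  obtain ⟨σ, hσ⟩ := exists_perm n (f := rep n (cD n f)) (f' := f)
    (congrArg Subtype.val (cD_rep n (cD n f)))
  conv_rhs => rw [hσ, ← ht σ]
  rw [repr_perm]

end Free

section Flat

variable {F : Type*} [CommRing F] (n : ℕ) {A : Type*} [CommRing A] [Algebra F A] 
  {M : Type*} [CommRing M] [Algebra F M]
  {L : Type*} [CommRing L] [Algebra F L]
  (b : Module.Basis A F M) (π : M →ₗ[F] A) (hπ : ∀ a, π (b a) = a)

include hπ in
lemma killOne [Module.Flat F A] (k : M) (hk : π k = 0) :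
    ∃ g : M →ₗ[F] M, π ∘ₗ g = π ∧ g k = 0 := by
  classical
  have h0 : ∑ a : (b.repr k).support, b.repr k a • (a : A) = 0 := by
    rw [← hk]
    conv_rhs => rw [← b.linearCombination_repr k, Finsupp.linearCombination_apply, Finsupp.sum,
      map_sum]
    simp only [map_smul, hπ]
    exact Finset.sum_coe_sort (b.repr k).support (fun a => b.repr k a • a)
  obtain ⟨m, c, y, h1, h2⟩ := Module.Flat.isTrivialRelation_of_sum_smul_eq_zero
    (R := F) (M := A) (f := fun a : (b.repr k).support => b.repr k a) (x := fun a => (a : A)) h0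
  let g : M →ₗ[F] M := b.constr F (fun a => if h : a ∈ (b.repr k).support then
    ∑ j, c ⟨a, h⟩ j • b (y j) else b a)
  refine ⟨g, b.ext fun a => ?_, ?_⟩
  · simp only [LinearMap.comp_apply, g, Module.Basis.constr_basis]
    split_ifs with h
    · simp only [map_sum, map_smul, hπ]
      exact (h1 ⟨a, h⟩).symm
    · rfl
  · conv_lhs => rw [← b.linearCombination_repr k, Finsupp.linearCombination_apply, Finsupp.sum,
      map_sum]
    rw [← Finset.sum_coe_sort]
    have : ∀ a : (b.repr k).support, g (b.repr k a • b a)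
        = ∑ j, (b.repr k a * c a j) • b (y j) := by
      intro a
      rw [map_smul]
      simp only [g, Module.Basis.constr_basis]
      rw [dif_pos a.2, Finset.smul_sum]
      simp only [smul_smul]
    simp only [this]
    rw [Finset.sum_comm]
    simp only [← Finset.sum_smul, h2]
    simp

lemma map_map_tens {M₁ M₂ M₃ : Type*} [AddCommGroup M₁] [AddCommGroup M₂] [AddCommGroup M₃]
    [Module F M₁] [Module F M₂] [Module F M₃] (g : M₂ →ₗ[F] M₃) (h : M₁ →ₗ[F] M₂)
    (t : ⨂[F] _ : Fin n, M₁) :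
    PiTensorProduct.map (fun _ : Fin n => g) (PiTensorProduct.map (fun _ : Fin n => h) t)
      = PiTensorProduct.map (fun _ : Fin n => g ∘ₗ h) t := by
  rw [PiTensorProduct.map_comp]; rfl

/-- Tensors killed by an endomorphism over `A`. -/
noncomputable def Zsub : Submodule F (⨂[F] _ : Fin n, M) where
  carrier := {t | ∀ g : M →ₗ[F] M, π ∘ₗ g = π → ∃ h : M →ₗ[F] M, π ∘ₗ h = π ∧
    PiTensorProduct.map (fun _ : Fin n => h) (PiTensorProduct.map (fun _ : Fin n => g) t) = 0}
  zero_mem' := fun g hg => ⟨LinearMap.id, by simp, by simp⟩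
  smul_mem' := by
    intro c t ht g hg
    obtain ⟨h, h1, h2⟩ := ht g hg
    exact ⟨h, h1, by rw [map_smul, map_smul, h2, smul_zero]⟩
  add_mem' := by
    intro t t' ht ht' g hg
    obtain ⟨h, h1, h2⟩ := ht g hg
    obtain ⟨h', h1', h2'⟩ := ht' (h ∘ₗ g) (by rw [← LinearMap.comp_assoc, h1, hg])
    refine ⟨h' ∘ₗ h, by rw [← LinearMap.comp_assoc, h1', h1], ?_⟩
    rw [map_add, map_add, ← map_map_tens n h' h, ← map_map_tens n h' h, h2, map_zero, zero_add,
      map_map_tens n h g, h2']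

include hπ in
lemma tprod_mem_Zsub [Module.Flat F A] (m : Fin n → M) (i : Fin n) (hi : π (m i) = 0) :
    tprod F m ∈ Zsub n π := by
  intro g hg
  obtain ⟨h, h1, h2⟩ := killOne b π hπ (g (m i))
    (by rw [← LinearMap.comp_apply, hg, hi])
  refine ⟨h, h1, ?_⟩
  rw [PiTensorProduct.map_tprod, PiTensorProduct.map_tprod]
  exact MultilinearMap.map_coord_zero _ i h2

lemma update_basis [DecidableEq (Fin n)] (m : Fin n → A) (i : Fin n) (x : A) :
    (fun j => b (Function.update m i x j)) = Function.update (fun j => b (m j)) i (b x) := by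
  funext j
  by_cases h : j = i
  · subst h; simp
  · simp [h]

/-- The section modulo `Zsub`. -/
noncomputable def secZ [Module.Flat F A] :
    MultilinearMap F (fun _ : Fin n => A) ((⨂[F] _ : Fin n, M) ⧸ Zsub n π) where
  toFun m := (Zsub n π).mkQ (tprod F (fun i => b (m i)))
  map_update_add' := by
    intro _ m i x y
    simp only [update_basis]
    rw [← map_add, ← sub_eq_zero, ← map_sub, Submodule.mkQ_apply, Submodule.Quotient.mk_eq_zero,
      ← MultilinearMap.map_update_add, ← MultilinearMap.map_update_sub]
    exact tprod_mem_Zsub n b π hπ _ i (by simp [hπ])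
  map_update_smul' := by
    intro _ m i c x
    simp only [update_basis]
    rw [← map_smul, ← sub_eq_zero, ← map_sub, Submodule.mkQ_apply, Submodule.Quotient.mk_eq_zero,
      ← MultilinearMap.map_update_smul, ← MultilinearMap.map_update_sub]
    exact tprod_mem_Zsub n b π hπ _ i (by simp [hπ])

include hπ in
lemma killTen [Module.Flat F A] (t : ⨂[F] _ : Fin n, M)
    (ht : PiTensorProduct.map (fun _ : Fin n => π) t = 0) : t ∈ Zsub n π := by
  have key : PiTensorProduct.lift (secZ n b π hπ) ∘ₗ PiTensorProduct.map (fun _ : Fin n => π)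
      = (Zsub n π).mkQ := by
    refine (tb n b).ext fun f => ?_
    rw [tb_apply, LinearMap.comp_apply, PiTensorProduct.map_tprod, PiTensorProduct.lift.tprod]
    simp [secZ, hπ]
  have := LinearMap.congr_fun key t
  rw [LinearMap.comp_apply, ht, map_zero] at this
  exact (Submodule.Quotient.mk_eq_zero _).1 this.symm

include hπ in
lemma map_surj : Function.Surjective (PiTensorProduct.map (R := F) (fun _ : Fin n => π)) := by
  rw [← LinearMap.range_eq_top, eq_top_iff, ← PiTensorProduct.span_tprod_eq_top,
    Submodule.span_le]
  rintro _ ⟨m, rfl⟩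
  exact ⟨tprod F (fun i => b (m i)), by rw [PiTensorProduct.map_tprod]; simp [hπ]⟩

include hπ in
lemma killL [Module.Flat F A] (t : L ⊗[F] (⨂[F] _ : Fin n, M))
    (ht : LinearMap.lTensor L (PiTensorProduct.map (fun _ : Fin n => π)) t = 0) :
    ∃ g : M →ₗ[F] M, π ∘ₗ g = π ∧
      LinearMap.lTensor L (PiTensorProduct.map (fun _ : Fin n => g)) t = 0 := by
  have hex := lTensor_exact L
    (LinearMap.exact_subtype_ker_map (PiTensorProduct.map (R := F) (fun _ : Fin n => π)))
    (map_surj n b π hπ)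
  obtain ⟨z, rfl⟩ := (hex t).1 ht
  suffices h : ∀ z, ∀ g : M →ₗ[F] M, π ∘ₗ g = π → ∃ h : M →ₗ[F] M, π ∘ₗ h = π ∧
      LinearMap.lTensor L (PiTensorProduct.map (fun _ : Fin n => h ∘ₗ g)) (LinearMap.lTensor L
        (LinearMap.ker (PiTensorProduct.map (R := F) (fun _ : Fin n => π))).subtype z) = 0 by
    obtain ⟨h, h1, h2⟩ := h z LinearMap.id (by simp)
    exact ⟨h, h1, by simpa using h2⟩
  intro z
  induction z with
  | zero => intro g hg; exact ⟨LinearMap.id, by simp, by simp⟩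
  | tmul l k =>
    intro g hg
    obtain ⟨h, h1, h2⟩ := killTen n b π hπ k.1 k.2 g hg
    refine ⟨h, h1, ?_⟩
    rw [LinearMap.lTensor_tmul, LinearMap.lTensor_tmul, ← map_map_tens n h g]
    rw [Submodule.subtype_apply, h2, TensorProduct.tmul_zero]
  | add x y hx hy =>
    intro g hg
    obtain ⟨h, h1, h2⟩ := hx g hg
    obtain ⟨h', h1', h2'⟩ := hy (h ∘ₗ g) (by rw [← LinearMap.comp_assoc, h1, hg])
    refine ⟨h' ∘ₗ h, by rw [← LinearMap.comp_assoc, h1', h1], ?_⟩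
    rw [map_add, map_add]
    have e : (PiTensorProduct.map (R := F) (fun _ : Fin n => (h' ∘ₗ h) ∘ₗ g)) =
        PiTensorProduct.map (fun _ : Fin n => h') ∘ₗ PiTensorProduct.map (fun _ : Fin n => h ∘ₗ g) := by
      ext t
      simp
    conv_lhs => enter [1]; rw [e, LinearMap.lTensor_comp, LinearMap.comp_apply, h2, map_zero]
    rw [zero_add]
    exact h2'

end Flat

section Sym

variable (F : Type*) [CommRing F] (n : ℕ) (A : Type*) [CommRing A] [Algebra F A]

/-- The orbit sum map into symmetric tensors. -/
noncomputable def qA : (D A n →₀ F) →ₗ[F] TS F A n :=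
  LinearMap.codRestrict (Subalgebra.toSubmodule (TS F A n)) (q F n (fun a : A => a))
    (fun s σ => perm_q n _ s σ)

lemma val_qA (s : D A n →₀ F) : (qA F n A s : ⨂[F] _ : Fin n, A) = q F n (fun a : A => a) s := rfl

lemma val_comp_qA : (TS F A n).val.toLinearMap ∘ₗ qA F n A = q F n (fun a : A => a) := rfl

end Sym

section Sym2

variable {F : Type*} [CommRing F] (n : ℕ) {A : Type*} [CommRing A] [Algebra F A]
  {M : Type*} [CommRing M] [Algebra F M]
  {L : Type*} [CommRing L] [Algebra F L]
  (b : Module.Basis A F M) (π : M →ₗ[F] A) (hπ : ∀ a, π (b a) = a)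

include hπ in
lemma map_comp_q : PiTensorProduct.map (fun _ : Fin n => π) ∘ₗ q F n b = q F n (fun a : A => a) := by
  refine Finsupp.lhom_ext' fun d => LinearMap.ext_ring ?_
  simp only [LinearMap.comp_apply, Finsupp.lsingle_apply, q_single, map_sum,
    PiTensorProduct.map_tprod, hπ]

lemma perm_map {M' : Type*} [CommRing M'] [Algebra F M'] (g : M →ₗ[F] M') (σ : Equiv.Perm (Fin n))
    (t : ⨂[F] _ : Fin n, M) :
    permHom F M' n σ (PiTensorProduct.map (fun _ : Fin n => g) t)
      = PiTensorProduct.map (fun _ : Fin n => g) (permHom F M n σ t) := by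
  suffices h : (permHom F M' n σ).toLinearMap ∘ₗ PiTensorProduct.map (fun _ : Fin n => g)
      = PiTensorProduct.map (fun _ : Fin n => g) ∘ₗ (permHom F M n σ).toLinearMap from
    LinearMap.congr_fun h t
  ext m
  simp

include hπ in
lemma qA_surj' [Module.Flat F A] : Function.Surjective (qA F n A) := by
  classical
  intro z
  obtain ⟨t, ht⟩ := map_surj n b π hπ (z : ⨂[F] _ : Fin n, A)
  obtain ⟨g, hg, h⟩ := killL n b π hπ (L := Equiv.Perm (Fin n) → F)
    (∑ σ, Pi.single σ (1 : F) ⊗ₜ[F] (permHom F M n σ t - t)) (by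
      rw [map_sum]
      refine Finset.sum_eq_zero fun σ _ => ?_
      rw [LinearMap.lTensor_tmul, map_sub, ← perm_map, ht, z.2 σ, sub_self,
        TensorProduct.tmul_zero])
  have inv : ∀ σ, permHom F M n σ (PiTensorProduct.map (fun _ : Fin n => g) t)
      = PiTensorProduct.map (fun _ : Fin n => g) t := by
    intro σ
    have := congrArg (fun u => TensorProduct.lid F _ (LinearMap.rTensor _
      (LinearMap.proj (R := F) (φ := fun _ : Equiv.Perm (Fin n) => F) σ) u)) h
    simp only [map_sum, LinearMap.lTensor_tmul, LinearMap.rTensor_tmul, LinearMap.proj_apply,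
      TensorProduct.lid_tmul, map_zero, Pi.single_apply, ite_smul, one_smul, zero_smul,
      Finset.sum_ite_eq, Finset.mem_univ, if_true, map_sub] at this
    rw [perm_map]
    exact sub_eq_zero.1 this
  refine ⟨rS n b (PiTensorProduct.map (fun _ : Fin n => g) t), Subtype.ext ?_⟩
  rw [val_qA, ← map_comp_q n b π hπ, LinearMap.comp_apply, q_rS n b _ inv, map_map_tens, hg, ht]

/-- The action of an endomorphism on multi-index coordinates. -/
noncomputable def gS (g : M →ₗ[F] M) : (D A n →₀ F) →ₗ[F] (D A n →₀ F) :=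
  rS n b ∘ₗ PiTensorProduct.map (fun _ : Fin n => g) ∘ₗ q F n b

lemma q_gS (g : M →ₗ[F] M) : q F n b ∘ₗ gS n b g = PiTensorProduct.map (fun _ : Fin n => g) ∘ₗ q F n b := by
  ext1 d
  ext
  simp only [gS, LinearMap.comp_apply]
  rw [q_rS]
  intro σ
  rw [perm_map, perm_q]

include hπ in
lemma qA_gS (g : M →ₗ[F] M) (hg : π ∘ₗ g = π) : qA F n A ∘ₗ gS n b g = qA F n A := by
  apply LinearMap.ext
  intro s
  apply Subtype.ext
  simp only [LinearMap.comp_apply, val_qA]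
  rw [← map_comp_q n b π hπ, LinearMap.comp_apply, LinearMap.comp_apply,
    ← LinearMap.comp_apply (q F n b), q_gS, LinearMap.comp_apply, map_map_tens, hg]

include hπ in
lemma val_inj' [Module.Flat F A] :
    Function.Injective (LinearMap.lTensor L (TS F A n).val.toLinearMap) := by
  rw [injective_iff_map_eq_zero]
  intro z hz
  obtain ⟨t, rfl⟩ := LinearMap.lTensor_surjective L (qA_surj' n b π hπ) z
  rw [← LinearMap.comp_apply, ← LinearMap.lTensor_comp, val_comp_qA, ← map_comp_q n b π hπ,
    LinearMap.lTensor_comp, LinearMap.comp_apply] at hz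
  obtain ⟨g, hg, h⟩ := killL n b π hπ _ hz
  rw [← LinearMap.comp_apply, ← LinearMap.lTensor_comp, ← q_gS, LinearMap.lTensor_comp,
    LinearMap.comp_apply] at h
  have h2 := congrArg (LinearMap.lTensor L (rS n b)) h
  have e : rS n b ∘ₗ q F n b = LinearMap.id := LinearMap.ext (rS_q n b)
  rw [← LinearMap.comp_apply, ← LinearMap.lTensor_comp, e, LinearMap.lTensor_id,
    LinearMap.id_apply, map_zero] at h2
  rw [← qA_gS n b π hπ g hg, LinearMap.lTensor_comp, LinearMap.comp_apply, h2, map_zero]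

include hπ in
lemma ker_qA_le' [Module.Flat F A] {N : Type*} [AddCommGroup N] [Module F N]
    (β : (D A n →₀ F) →ₗ[F] N)
    (hβ : ∀ g : M →ₗ[F] M, π ∘ₗ g = π → β ∘ₗ gS n b g = β) :
    LinearMap.ker (qA F n A) ≤ LinearMap.ker β := by
  intro t ht
  rw [LinearMap.mem_ker] at ht ⊢
  have hz : PiTensorProduct.map (fun _ : Fin n => π) (q F n b t) = 0 := by
    rw [← LinearMap.comp_apply, map_comp_q n b π hπ, ← val_qA, ht]; rfl
  obtain ⟨g, hg, h⟩ := killTen n b π hπ _ hz LinearMap.id (by simp)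
  have h' : PiTensorProduct.map (fun _ : Fin n => g) (q F n b t) = 0 := by simpa using h
  rw [← hβ g hg]
  rw [LinearMap.comp_apply, gS, LinearMap.comp_apply, LinearMap.comp_apply, h', map_zero, map_zero]

end Sym2

section Gam

open Classical

variable (F : Type*) [CommRing F] (n : ℕ) (A : Type*) [CommRing A] [Algebra F A]
  {L : Type*} [CommRing L] [Algebra F L] {L' : Type*} [CommRing L'] [Algebra F L']

/-- The free algebra resolving `A`. -/
noncomputable def bM : Module.Basis A F (MonoidAlgebra F A) :=
  Module.Basis.ofRepr (MonoidAlgebra.coeffLinearEquiv F)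

/-- The projection of the free module on `A`. -/
noncomputable def pM : MonoidAlgebra F A →ₗ[F] A := (bM F A).constr F id

lemma pM_bM (a : A) : pM F A (bM F A a) = a := by simp [pM]

variable {F A}

lemma exists_rep (x : L ⊗[F] A) : ∃ (J : Finset A) (l : A → L), x = ∑ a ∈ J, l a ⊗ₜ[F] a := by
  obtain ⟨s, rfl⟩ := exists_sum x
  refine ⟨s.image Prod.snd, fun a => ∑ j ∈ s with j.2 = a, j.1, ?_⟩
  rw [← Finset.sum_fiberwise_of_maps_to (t := s.image Prod.snd) (g := Prod.snd)
    (fun f hf => Finset.mem_image_of_mem _ hf)]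
  refine Finset.sum_congr rfl fun a _ => ?_
  rw [TensorProduct.sum_tmul]
  refine Finset.sum_congr rfl fun j hj => ?_
  rw [(Finset.mem_filter.1 hj).2]

lemma lTensor_qA (J : Finset A) (l : A → L) :
    LinearMap.lTensor L (TS F A n).val.toLinearMap (LinearMap.lTensor L (qA F n A) (cc F n J l))
      = gF n (∑ a ∈ J, l a ⊗ₜ[F] a) := by
  rw [gF_eq, ← LinearMap.comp_apply, ← LinearMap.lTensor_comp, val_comp_qA]

lemma exists_gamma (x : L ⊗[F] A) : ∃ z : L ⊗[F] TS F A n,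
    LinearMap.lTensor L (TS F A n).val.toLinearMap z = gF n x := by
  obtain ⟨J, l, rfl⟩ := exists_rep x
  exact ⟨_, lTensor_qA n J l⟩

/-- The law `γ`. -/
noncomputable def gam (x : L ⊗[F] A) : L ⊗[F] TS F A n := (exists_gamma n x).choose

lemma gam_spec (x : L ⊗[F] A) : 
    LinearMap.lTensor L (TS F A n).val.toLinearMap (gam n x) = gF n x := (exists_gamma n x).choose_spec

variable [Module.Flat F A]

variable (F A L) in
lemma val_inj : Function.Injective (LinearMap.lTensor L (TS F A n).val.toLinearMap) :=
  val_inj' n (bM F A) (pM F A) (pM_bM F A)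

variable (F A) in
lemma qA_surj : Function.Surjective (qA F n A) :=
  qA_surj' n (bM F A) (pM F A) (pM_bM F A)

lemma gam_eq (J : Finset A) (l : A → L) :
    gam n (∑ a ∈ J, l a ⊗ₜ[F] a) = LinearMap.lTensor L (qA F n A) (cc F n J l) := by
  apply val_inj F n A L
  rw [gam_spec, lTensor_qA]

lemma lT_val_mul (x y : L ⊗[F] TS F A n) :
    LinearMap.lTensor L (TS F A n).val.toLinearMap (x * y) =
    LinearMap.lTensor L (TS F A n).val.toLinearMap x *
    LinearMap.lTensor L (TS F A n).val.toLinearMap y :=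
  map_mul (Algebra.TensorProduct.map (AlgHom.id F L) (TS F A n).val) x y

lemma gam_mul (x y : L ⊗[F] A) : gam n (x * y) = gam n x * gam n y := by
  apply val_inj F n A L
  rw [gam_spec, lT_val_mul, gam_spec, gam_spec, gF_mul]

lemma gam_one : gam n (1 : L ⊗[F] A) = 1 := by
  apply val_inj F n A L
  rw [gam_spec, gF_one]
  exact (map_one (Algebra.TensorProduct.map (AlgHom.id F L) (TS F A n).val)).symm

lemma gam_smul (c : L) (x : L ⊗[F] A) : gam n (c • x) = c ^ n • gam n x := by
  apply val_inj F n A L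
  rw [gam_spec, gF_smul, ← gam_spec]
  exact ((TensorProduct.AlgebraTensorModule.lTensor L L (TS F A n).val.toLinearMap).map_smul
    (c ^ n) (gam n x)).symm

lemma gam_rTensor (h : L →ₐ[F] L') (x : L ⊗[F] A) :
    gam n (LinearMap.rTensor A h.toLinearMap x) = LinearMap.rTensor _ h.toLinearMap (gam n x) := by
  apply val_inj F n A L'
  rw [gam_spec, ← gF_rTensor, ← gam_spec, ← LinearMap.comp_apply, ← LinearMap.comp_apply,
    LinearMap.lTensor_comp_rTensor, LinearMap.rTensor_comp_lTensor]

end Gam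

section Law

variable {F : Type u} [CommRing F] {A : Type v} [CommRing A] [Algebra F A]
  {B : Type w} [CommRing B] [Algebra F B]

/-- A commutative semiring which is an algebra over a ring is a ring. -/
noncomputable abbrev toRing (F : Type u) [CommRing F] (S : Type u) [CommSemiring S] [Algebra F S] :
    CommRing S :=
  { (inferInstance : CommSemiring S), Algebra.semiringToRing F with }

/-- Bundling a polynomial law. -/
noncomputable def law (φ : ∀ (L : Type u) [CommRing L] [Algebra F L], L ⊗[F] A → L ⊗[F] B)
    (h : IsPolyLaw F A B φ) : PolynomialLaw F A B where
  toFun' S _ _ := letI := toRing F S; φ S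
  isCompat' {S} _ _ {S'} _ _ f := by
    letI := toRing F S
    letI := toRing F S'
    funext x
    exact (h S S' f x).symm

lemma law_toFun (φ : ∀ (L : Type u) [CommRing L] [Algebra F L], L ⊗[F] A → L ⊗[F] B)
    (h : IsPolyLaw F A B φ) (L : Type u) [i : CommRing L] [j : Algebra F L] (x : L ⊗[F] A) :
    (law φ h).toFun L x = φ L x := by
  rw [← PolynomialLaw.toFun'_eq_toFun]
  have := @h L L (toRing F L) j i j (AlgHom.id F L) x
  simp only [AlgHom.toLinearMap_id, LinearMap.rTensor_id, LinearMap.id_apply] at this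
  exact this.symm

variable (P : PolynomialLaw F A B)

lemma toFun_eq (n : ℕ) [Module.Flat F A] (ρ : TS F A n →ₗ[F] B)
    (h : ∀ (L : Type u) [CommRing L] [Algebra F L] (x : L ⊗[F] A),
      P.toFun L x = LinearMap.lTensor L ρ (gam n x))
    {L : Type*} [CommRing L] [Algebra F L] (x : L ⊗[F] A) :
    P.toFun L x = LinearMap.lTensor L ρ (gam n x) := by
  obtain ⟨m, ψ, p, rfl⟩ := PolynomialLaw.exists_lift x
  rw [← PolynomialLaw.isCompat_apply, h, gam_rTensor, ← LinearMap.comp_apply,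
    ← LinearMap.comp_apply, LinearMap.lTensor_comp_rTensor, LinearMap.rTensor_comp_lTensor]

lemma toFun_smul' (n : ℕ)
    (h : ∀ (L : Type u) [CommRing L] [Algebra F L] (c : L) (x : L ⊗[F] A),
      P.toFun L (c • x) = c ^ n • P.toFun L x)
    {L : Type*} [CommRing L] [Algebra F L] (c : L) (x : L ⊗[F] A) :
    P.toFun L (c • x) = c ^ n • P.toFun L x := by
  obtain ⟨m, ψ, p, c, rfl, rfl⟩ := PolynomialLaw.exists_lift' x c
  have e1 : ψ c • LinearMap.rTensor A ψ.toLinearMap p = LinearMap.rTensor A ψ.toLinearMap (c • p) := by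
    induction p with
    | zero => simp
    | tmul a b => simp [TensorProduct.smul_tmul']
    | add x y hx hy => rw [smul_add, map_add, smul_add, map_add, hx, hy]
  have e2 : ∀ z, LinearMap.rTensor B ψ.toLinearMap (c ^ n • z)
      = ψ c ^ n • LinearMap.rTensor B ψ.toLinearMap z := by
    intro z
    induction z with
    | zero => simp
    | tmul a b => simp [TensorProduct.smul_tmul']
    | add x y hx hy => rw [smul_add, map_add, map_add, smul_add, hx, hy]
  rw [e1, ← PolynomialLaw.isCompat_apply, ← PolynomialLaw.isCompat_apply, h, e2]

lemma rTensor_mul {L : Type*} [CommRing L] [Algebra F L] {L' : Type*} [CommRing L'] [Algebra F L']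
    {N : Type*} [CommRing N] [Algebra F N]
    (ψ : L →ₐ[F] L') (x y : L ⊗[F] N) : LinearMap.rTensor N ψ.toLinearMap (x * y)
      = LinearMap.rTensor N ψ.toLinearMap x * LinearMap.rTensor N ψ.toLinearMap y :=
  map_mul (Algebra.TensorProduct.map ψ (AlgHom.id F N)) x y

lemma toFun_mul' 
    (h : ∀ (L : Type u) [CommRing L] [Algebra F L] (x y : L ⊗[F] A),
      P.toFun L (x * y) = P.toFun L x * P.toFun L y)
    {L : Type*} [CommRing L] [Algebra F L] (x y : L ⊗[F] A) :
    P.toFun L (x * y) = P.toFun L x * P.toFun L y := by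
  obtain ⟨m, ψ, p, rfl⟩ := PolynomialLaw.exists_lift x
  obtain ⟨m', ψ', p', rfl⟩ := PolynomialLaw.exists_lift y
  let K := MvPolynomial (Fin m) F ⊗[F] MvPolynomial (Fin m') F
  let Ψ : K →ₐ[F] L := Algebra.TensorProduct.productMap ψ ψ'
  have h1 : ψ = Ψ.comp Algebra.TensorProduct.includeLeft :=
    (Algebra.TensorProduct.productMap_left ψ ψ').symm
  have h2 : ψ' = Ψ.comp Algebra.TensorProduct.includeRight :=
    (Algebra.TensorProduct.productMap_right ψ ψ').symm
  have e1 : LinearMap.rTensor A ψ.toLinearMap p = LinearMap.rTensor A Ψ.toLinearMap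
      (LinearMap.rTensor A (Algebra.TensorProduct.includeLeft : _ →ₐ[F] K).toLinearMap p) := by
    rw [← LinearMap.comp_apply, ← LinearMap.rTensor_comp, h1]; rfl
  have e2 : LinearMap.rTensor A ψ'.toLinearMap p' = LinearMap.rTensor A Ψ.toLinearMap
      (LinearMap.rTensor A (Algebra.TensorProduct.includeRight : _ →ₐ[F] K).toLinearMap p') := by
    rw [← LinearMap.comp_apply, ← LinearMap.rTensor_comp, h2]; rfl
  rw [e1, e2]
  generalize LinearMap.rTensor A (Algebra.TensorProduct.includeLeft : _ →ₐ[F] K).toLinearMap p = x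
  generalize LinearMap.rTensor A (Algebra.TensorProduct.includeRight : _ →ₐ[F] K).toLinearMap p' = y
  rw [← rTensor_mul, ← PolynomialLaw.isCompat_apply, ← PolynomialLaw.isCompat_apply,
    ← PolynomialLaw.isCompat_apply, h, rTensor_mul]

end Law

section Coeff

open Classical

variable {F : Type*} [CommRing F] {N : Type*} [AddCommGroup N] [Module F N]
  {N' : Type*} [AddCommGroup N'] [Module F N']
  {L : Type*} [CommRing L] [Algebra F L] {L' : Type*} [CommRing L'] [Algebra F L'] {I : Type*}

variable (N) in
/-- Contraction with a linear functional. -/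
noncomputable def ev (c : L →ₗ[F] F) : L ⊗[F] N →ₗ[F] N :=
  (TensorProduct.lid F N).toLinearMap ∘ₗ LinearMap.rTensor N c

@[simp] lemma ev_tmul (c : L →ₗ[F] F) (l : L) (y : N) : ev N c (l ⊗ₜ y) = c l • y := by
  simp [ev]

lemma ev_lTensor (c : L →ₗ[F] F) (g : N →ₗ[F] N') (z : L ⊗[F] N) :
    ev N' c (LinearMap.lTensor L g z) = g (ev N c z) := by
  induction z with
  | zero => simp
  | tmul a b => simp
  | add x y hx hy => simp only [map_add, hx, hy]

lemma ev_rTensor (c : L' →ₗ[F] F) (h : L →ₗ[F] L') (z : L ⊗[F] N) :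
    ev N c (LinearMap.rTensor N h z) = ev N (c ∘ₗ h) z := by
  induction z with
  | zero => simp
  | tmul a b => simp
  | add x y hx hy => simp only [map_add, hx, hy]

lemma ev_ext (z z' : MvPolynomial I F ⊗[F] N)
    (h : ∀ d, ev N (MvPolynomial.lcoeff F d) z = ev N (MvPolynomial.lcoeff F d) z') : z = z' := by
  let e := TensorProduct.equivFinsuppOfBasisLeft (N := N) (MvPolynomial.basisMonomials I F)
  have he : ∀ z d, e z d = ev N (MvPolynomial.lcoeff F d) z := by
    intro z d
    induction z with
    | zero => simp
    | tmul a b => 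
      simp only [e, TensorProduct.equivFinsuppOfBasisLeft_apply_tmul_apply, ev_tmul]
      rfl
    | add x y hx hy => simp only [map_add, Finsupp.add_apply, hx, hy]
  apply e.injective
  ext d
  rw [he, he, h]

lemma mono_X (n : ℕ) (d : D I n) :
    mono n (fun a => (MvPolynomial.X a : MvPolynomial I F)) d = MvPolynomial.monomial d.1 1 := by
  rw [mono, MvPolynomial.monomial_eq]; simp

lemma aeval_monomial (l : I → L) (d : I →₀ ℕ) :
    MvPolynomial.aeval (R := F) l (MvPolynomial.monomial d 1) = d.prod (fun a k => l a ^ k) := by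
  rw [MvPolynomial.aeval_monomial]; simp

/-- Killing variables outside `J`. -/
noncomputable def kap (F : Type*) [CommRing F] {I : Type*} (J : Finset I) :
    MvPolynomial I F →ₐ[F] MvPolynomial I F :=
  MvPolynomial.aeval (fun a => if a ∈ J then MvPolynomial.X a else 0)

lemma kap_monomial (J : Finset I) (e : I →₀ ℕ) :
    kap F J (MvPolynomial.monomial e 1) = if e.support ⊆ J then MvPolynomial.monomial e 1 else 0 := by
  rw [kap, aeval_monomial]
  split_ifs with h
  · rw [MvPolynomial.monomial_eq, map_one, one_mul]
    refine Finset.prod_congr rfl fun a ha => ?_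
    simp only [if_pos (h ha)]
  · obtain ⟨a, ha, haJ⟩ := Finset.not_subset.1 h
    refine Finset.prod_eq_zero ha ?_
    simp only [if_neg haJ]
    exact zero_pow (Finsupp.mem_support_iff.1 ha)

lemma lcoeff_kap (J : Finset I) (d : I →₀ ℕ) :
    MvPolynomial.lcoeff F d ∘ₗ (kap F J).toLinearMap
      = if d.support ⊆ J then MvPolynomial.lcoeff F d else 0 := by
  refine (MvPolynomial.basisMonomials I F).ext fun e => ?_
  simp only [MvPolynomial.coe_basisMonomials, LinearMap.comp_apply, AlgHom.toLinearMap_apply]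
  rw [kap_monomial]
  by_cases hed : e = d
  · subst hed
    split_ifs <;> simp
  · have h0 : MvPolynomial.lcoeff F d (MvPolynomial.monomial e 1) = 0 := by
      simp [MvPolynomial.lcoeff, MvPolynomial.coeff_monomial, hed]
    split_ifs <;> simp [h0]

/-- Homogenization. -/
noncomputable def hmg (F : Type*) [CommRing F] (I : Type*) :
    MvPolynomial I F →ₐ[F] Polynomial (MvPolynomial I F) :=
  MvPolynomial.aeval (fun a => Polynomial.X * Polynomial.C (MvPolynomial.X a))

lemma hmg_monomial (e : I →₀ ℕ) :
    hmg F I (MvPolynomial.monomial e 1)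
      = Polynomial.X ^ e.degree * Polynomial.C (MvPolynomial.monomial e 1) := by
  rw [hmg, aeval_monomial]
  simp only [mul_pow]
  rw [Finsupp.prod_mul, MvPolynomial.monomial_eq, map_one, one_mul]
  congr 1
  · rw [Finsupp.prod, Finset.prod_pow_eq_pow_sum]; rfl
  · rw [Finsupp.prod, Finsupp.prod, map_prod]; simp

/-- A double coefficient. -/
noncomputable def lco (F : Type*) [CommRing F] {I : Type*} (k : ℕ) (d : I →₀ ℕ) :
    Polynomial (MvPolynomial I F) →ₗ[F] F :=
  MvPolynomial.lcoeff F d ∘ₗ (Polynomial.lcoeff (MvPolynomial I F) k).restrictScalars F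

lemma lco_hmg (d : I →₀ ℕ) :
    lco F d.degree d ∘ₗ (hmg F I).toLinearMap = MvPolynomial.lcoeff F d := by
  refine (MvPolynomial.basisMonomials I F).ext fun e => ?_
  simp only [MvPolynomial.coe_basisMonomials, LinearMap.comp_apply, AlgHom.toLinearMap_apply]
  rw [hmg_monomial]
  simp only [lco, LinearMap.comp_apply, LinearMap.restrictScalars_apply, Polynomial.lcoeff_apply,
    Polynomial.coeff_X_pow_mul', Polynomial.coeff_C]
  by_cases hed : e = d
  · subst hed
    simp
  · have h0 : MvPolynomial.lcoeff F d (MvPolynomial.monomial e 1) = 0 := by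
      simp [MvPolynomial.lcoeff, MvPolynomial.coeff_monomial, hed]
    split_ifs <;> simp [h0]

lemma lco_smul (n k : ℕ) (hk : k ≠ n) (d : I →₀ ℕ) (z : MvPolynomial I F ⊗[F] N) :
    ev N (lco F k d) ((Polynomial.X : Polynomial (MvPolynomial I F)) ^ n •
      LinearMap.rTensor N (Polynomial.CAlgHom (R := F) (A := MvPolynomial I F)).toLinearMap z) = 0 := by
  induction z with
  | zero => simp
  | tmul a b =>
    rw [LinearMap.rTensor_tmul, TensorProduct.smul_tmul', ev_tmul]
    simp only [lco, LinearMap.comp_apply, LinearMap.restrictScalars_apply, Polynomial.lcoeff_apply,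
      smul_eq_mul, AlgHom.toLinearMap_apply, Polynomial.CAlgHom_apply,
      Polynomial.coeff_X_pow_mul', Polynomial.coeff_C]
    split_ifs with h1 h2
    · omega
    · simp
    · simp
  | add x y hx hy => rw [map_add, smul_add, map_add, hx, hy, add_zero]

end Coeff

section Rep

open Classical

variable {F : Type u} [CommRing F] (n : ℕ) {A : Type v} [CommRing A] [Algebra F A]
  {B : Type w} [CommRing B] [Algebra F B] (P : PolynomialLaw F A B)

variable (F) in
/-- The generic element with support `J`. -/
noncomputable def xx (J : Finset A) : MvPolynomial A F ⊗[F] A :=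
  ∑ a ∈ J, MvPolynomial.X a ⊗ₜ[F] a

/-- The coefficients of a polynomial law. -/
noncomputable def co (J : Finset A) (d : A →₀ ℕ) : B :=
  ev B (MvPolynomial.lcoeff F d) (P.toFun _ (xx F J))

lemma rTensor_kap (J K : Finset A) (h : J ⊆ K) :
    LinearMap.rTensor A (kap F J).toLinearMap (xx F K) = xx F J := by
  simp only [xx, map_sum, LinearMap.rTensor_tmul, AlgHom.toLinearMap_apply, kap,
    MvPolynomial.aeval_X]
  rw [← Finset.sum_subset h]
  · exact Finset.sum_congr rfl fun a ha => by rw [if_pos ha]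
  · intro a _ ha
    rw [if_neg ha, TensorProduct.zero_tmul]

lemma co_kap (J K : Finset A) (h : J ⊆ K) (d : A →₀ ℕ) :
    co P J d = if d.support ⊆ J then co P K d else 0 := by
  rw [co, ← rTensor_kap J K h, ← PolynomialLaw.isCompat_apply, ev_rTensor, lcoeff_kap]
  split_ifs
  · rfl
  · simp [ev]

lemma co_zero (hP : ∀ (L : Type u) [CommRing L] [Algebra F L] (c : L) (x : L ⊗[F] A),
      P.toFun L (c • x) = c ^ n • P.toFun L x) (J : Finset A) (d : A →₀ ℕ) (hd : d.degree ≠ n) :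
    co P J d = 0 := by
  have h1 : LinearMap.rTensor A (hmg F A).toLinearMap (xx F J)
      = (Polynomial.X : Polynomial (MvPolynomial A F)) •
      LinearMap.rTensor A (Polynomial.CAlgHom (R := F) (A := MvPolynomial A F)).toLinearMap
        (xx F J) := by
    simp only [xx, map_sum, LinearMap.rTensor_tmul, AlgHom.toLinearMap_apply, hmg,
      MvPolynomial.aeval_X, Finset.smul_sum, TensorProduct.smul_tmul', Polynomial.CAlgHom_apply,
      smul_eq_mul]
  rw [co, ← lco_hmg, ← ev_rTensor, PolynomialLaw.isCompat_apply, h1, toFun_smul' P n hP,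
    ← PolynomialLaw.isCompat_apply, lco_smul n _ hd]

/-- The linear form attached to a polynomial law. -/
noncomputable def bet : (D A n →₀ F) →ₗ[F] B :=
  Finsupp.linearCombination F (fun d => co P d.1.support d.1)

lemma bet_single (d : D A n) : bet n P (Finsupp.single d 1) = co P d.1.support d.1 := by
  simp [bet]

lemma ev_cc (J : Finset A) (e : A →₀ ℕ) (he : e.degree ≠ n ∨ ¬ e.support ⊆ J) :
    ev _ (MvPolynomial.lcoeff F e)
      (cc F n J (fun a => (MvPolynomial.X a : MvPolynomial A F))) = 0 := by
  rw [cc, map_sum]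
  refine Finset.sum_eq_zero fun d hd => ?_
  rw [mem_Dset] at hd
  have hne : d.1 ≠ e := by
    rintro rfl
    rcases he with he | he
    · exact he d.2
    · exact he hd
  rw [mono_X, ev_tmul]
  simp [MvPolynomial.lcoeff, MvPolynomial.coeff_monomial, hne]

lemma ev_cc' (J : Finset A) (d : D A n) (he : d.1.support ⊆ J) :
    ev _ (MvPolynomial.lcoeff F d.1)
      (cc F n J (fun a => (MvPolynomial.X a : MvPolynomial A F))) = Finsupp.single d 1 := by
  rw [cc, map_sum, Finset.sum_eq_single d]
  · rw [mono_X, ev_tmul]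
    simp [MvPolynomial.lcoeff, MvPolynomial.coeff_monomial]
  · intro d' _ hd'
    have hne : d'.1 ≠ d.1 := fun h => hd' (Subtype.ext h)
    rw [mono_X, ev_tmul]
    simp [MvPolynomial.lcoeff, MvPolynomial.coeff_monomial, hne]
  · intro h
    exact absurd ((mem_Dset n J d).2 he) h

lemma rTensor_cc {L : Type*} [CommRing L] [Algebra F L] (J : Finset A) (l : A → L) :
    LinearMap.rTensor _ (MvPolynomial.aeval (R := F) l).toLinearMap
      (cc F n J (fun a => (MvPolynomial.X a : MvPolynomial A F))) = cc F n J l := by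
  simp only [cc, map_sum, LinearMap.rTensor_tmul, mono_X, AlgHom.toLinearMap_apply,
    aeval_monomial]
  rfl

lemma claimC (hP : ∀ (L : Type u) [CommRing L] [Algebra F L] (c : L) (x : L ⊗[F] A),
      P.toFun L (c • x) = c ^ n • P.toFun L x) {L : Type*} [CommRing L] [Algebra F L]
    (J : Finset A) (l : A → L) :
    P.toFun L (∑ a ∈ J, l a ⊗ₜ[F] a) = LinearMap.lTensor L (bet n P) (cc F n J l) := by
  have hx : ∑ a ∈ J, l a ⊗ₜ[F] a
      = LinearMap.rTensor A (MvPolynomial.aeval (R := F) l).toLinearMap (xx F J) := by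
    simp [xx]
  have hu : P.toFun _ (xx F J) = LinearMap.lTensor _ (bet n P)
      (cc F n J (fun a => (MvPolynomial.X a : MvPolynomial A F))) := by
    refine ev_ext _ _ fun e => ?_
    rw [ev_lTensor]
    by_cases h1 : e.degree = n
    · by_cases h2 : e.support ⊆ J
      · rw [ev_cc' n J ⟨e, h1⟩ h2, bet_single]
        have := co_kap P e.support J h2 e
        rw [if_pos subset_rfl] at this
        exact this.symm
      · rw [ev_cc n J e (Or.inr h2), map_zero]
        have := co_kap P J J subset_rfl e
        rwa [if_neg h2] at this
    · rw [ev_cc n J e (Or.inl h1), map_zero]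
      exact co_zero n P hP J e h1
  rw [hx, ← PolynomialLaw.isCompat_apply, hu, ← rTensor_cc n J l, ← LinearMap.comp_apply,
    ← LinearMap.comp_apply, LinearMap.lTensor_comp_rTensor, LinearMap.rTensor_comp_lTensor]

lemma exists_rep_basis {L : Type*} [CommRing L] [Algebra F L] {M : Type*} [CommRing M]
    [Algebra F M] (b : Module.Basis A F M) (x : L ⊗[F] M) :
    ∃ (J : Finset A) (l : A → L), x = ∑ a ∈ J, l a ⊗ₜ[F] b a := by
  let e := TensorProduct.equivFinsuppOfBasisRight (M := L) b
  refine ⟨(e x).support, e x, ?_⟩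
  have := e.symm_apply_apply x
  rw [← this]
  simp only [LinearEquiv.apply_symm_apply]
  rw [TensorProduct.equivFinsuppOfBasisRight_symm_apply]
  rfl

lemma bet_gS (hP : ∀ (L : Type u) [CommRing L] [Algebra F L] (c : L) (x : L ⊗[F] A),
      P.toFun L (c • x) = c ^ n • P.toFun L x)
    {M : Type*} [CommRing M] [Algebra F M] (b : Module.Basis A F M) (π : M →ₗ[F] A)
    (hπ : ∀ a, π (b a) = a) (g : M →ₗ[F] M) (hg : π ∘ₗ g = π) :
    bet n P ∘ₗ gS n b g = bet n P := by
  refine Finsupp.lhom_ext' fun d => LinearMap.ext_ring ?_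
  simp only [LinearMap.comp_apply, Finsupp.lsingle_apply]
  set J := d.1.support
  set L := MvPolynomial A F
  set X : A → L := fun a => MvPolynomial.X a
  obtain ⟨J', l', hl'⟩ := exists_rep_basis b
    (LinearMap.lTensor L g (∑ a ∈ J, X a ⊗ₜ[F] b a))
  have h1 : LinearMap.lTensor L (gS n b g) (cc F n J X) = cc F n J' l' := by
    have hinj : Function.LeftInverse (LinearMap.lTensor L (rS n b)) (LinearMap.lTensor L (q F n b)) := by
      intro z
      rw [← LinearMap.comp_apply, ← LinearMap.lTensor_comp]
      have : rS n b ∘ₗ q F n b = LinearMap.id := LinearMap.ext fun s => rS_q n b s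
      rw [this, LinearMap.lTensor_id, LinearMap.id_apply]
    apply hinj.injective
    rw [← gF_eq, ← hl', ← gF_lTensor, gF_eq, ← LinearMap.comp_apply, ← LinearMap.comp_apply,
      ← LinearMap.lTensor_comp, ← LinearMap.lTensor_comp, q_gS]
  have h2 : ∑ a ∈ J, X a ⊗ₜ[F] a = ∑ a ∈ J', l' a ⊗ₜ[F] a := by
    have := congrArg (LinearMap.lTensor L π) hl'
    rw [← LinearMap.comp_apply, ← LinearMap.lTensor_comp, hg] at this
    simpa only [map_sum, LinearMap.lTensor_tmul, hπ] using this
  have h3 : LinearMap.lTensor L (bet n P) (cc F n J X)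
      = LinearMap.lTensor L (bet n P) (LinearMap.lTensor L (gS n b g) (cc F n J X)) := by
    rw [h1, ← claimC n P hP, ← claimC n P hP, h2]
  have h4 := congrArg (ev B (MvPolynomial.lcoeff F d.1)) h3
  rw [ev_lTensor, ev_lTensor, ev_lTensor, ev_cc' n J d subset_rfl] at h4
  exact h4.symm

variable [Module.Flat F A]

lemma exists_rho (hP : ∀ (L : Type u) [CommRing L] [Algebra F L] (c : L) (x : L ⊗[F] A),
      P.toFun L (c • x) = c ^ n • P.toFun L x) :
    ∃ ρ : TS F A n →ₗ[F] B, ρ ∘ₗ qA F n A = bet n P := by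
  have hk := ker_qA_le' n (bM F A) (pM F A) (pM_bM F A) (bet n P)
    (fun g hg => bet_gS n P hP (bM F A) (pM F A) (pM_bM F A) g hg)
  refine ⟨(LinearMap.ker (qA F n A)).liftQ (bet n P) hk ∘ₗ
    ((qA F n A).quotKerEquivOfSurjective (qA_surj F n A)).symm.toLinearMap, ?_⟩
  apply LinearMap.ext
  intro s
  simp only [LinearMap.comp_apply, LinearEquiv.coe_coe]
  have : ((qA F n A).quotKerEquivOfSurjective (qA_surj F n A)).symm (qA F n A s)
      = (LinearMap.ker (qA F n A)).mkQ s := by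
    rw [LinearEquiv.symm_apply_eq]; rfl
  rw [this]
  rfl

lemma rho_gam (hP : ∀ (L : Type u) [CommRing L] [Algebra F L] (c : L) (x : L ⊗[F] A),
      P.toFun L (c • x) = c ^ n • P.toFun L x) (ρ : TS F A n →ₗ[F] B)
    (hρ : ρ ∘ₗ qA F n A = bet n P) {L : Type*} [CommRing L] [Algebra F L] (x : L ⊗[F] A) :
    P.toFun L x = LinearMap.lTensor L ρ (gam n x) := by
  obtain ⟨J, l, rfl⟩ := exists_rep x
  rw [gam_eq, claimC n P hP, ← LinearMap.comp_apply, ← LinearMap.lTensor_comp, hρ]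

/-- Uniqueness of the linear map. -/
lemma rho_unique (ρ : TS F A n →ₗ[F] B)
    (h : ∀ (L : Type u) [CommRing L] [Algebra F L] (x : L ⊗[F] A),
      P.toFun L x = LinearMap.lTensor L ρ (gam n x)) : ρ ∘ₗ qA F n A = bet n P := by
  refine Finsupp.lhom_ext' fun d => LinearMap.ext_ring ?_
  simp only [LinearMap.comp_apply, Finsupp.lsingle_apply]
  rw [bet_single, co, toFun_eq P n ρ h, xx, gam_eq, ev_lTensor, ev_lTensor,
    ev_cc' n _ d subset_rfl]

/-- Coefficient of the product. -/
noncomputable def cpr (F : Type*) [CommRing F] {I : Type*} (d e : I →₀ ℕ) :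
    MvPolynomial I F ⊗[F] MvPolynomial I F →ₗ[F] F :=
  LinearMap.mul' F F ∘ₗ TensorProduct.map (MvPolynomial.lcoeff F d) (MvPolynomial.lcoeff F e)

lemma ev_mul {C : Type*} [CommRing C] [Algebra F C]
    (d e : A →₀ ℕ) (z z' : MvPolynomial A F ⊗[F] C) :
    ev C (cpr F d e) (LinearMap.rTensor C
      (Algebra.TensorProduct.includeLeft (R := F) (S := F) (A := MvPolynomial A F)
        (B := MvPolynomial A F)).toLinearMap z *
      LinearMap.rTensor C
      (Algebra.TensorProduct.includeRight (R := F) (A := MvPolynomial A F)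
        (B := MvPolynomial A F)).toLinearMap z')
      = ev C (MvPolynomial.lcoeff F d) z * ev C (MvPolynomial.lcoeff F e) z' := by
  induction z with
  | zero => simp
  | add x y hx hy => simp only [map_add, add_mul, hx, hy]
  | tmul a b =>
    induction z' with
    | zero => simp
    | add x y hx hy => simp only [map_add, mul_add, hx, hy]
    | tmul a' b' =>
      simp only [LinearMap.rTensor_tmul, AlgHom.toLinearMap_apply,
        Algebra.TensorProduct.includeLeft_apply, Algebra.TensorProduct.includeRight_apply,
        Algebra.TensorProduct.tmul_mul_tmul, mul_one, one_mul, ev_tmul, cpr, LinearMap.comp_apply,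
        TensorProduct.map_tmul, LinearMap.mul'_apply, smul_mul_smul_comm]

lemma lTensor_mul' {L : Type*} [CommRing L] [Algebra F L] {C : Type*} [CommRing C] [Algebra F C]
    (ρ : C →ₐ[F] B) (x y : L ⊗[F] C) : LinearMap.lTensor L ρ.toLinearMap (x * y)
      = LinearMap.lTensor L ρ.toLinearMap x * LinearMap.lTensor L ρ.toLinearMap y :=
  map_mul (Algebra.TensorProduct.map (AlgHom.id F L) ρ) x y

lemma rho_mul (hP : ∀ (L : Type u) [CommRing L] [Algebra F L] (c : L) (x : L ⊗[F] A),
      P.toFun L (c • x) = c ^ n • P.toFun L x)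
    (hm : ∀ (L : Type u) [CommRing L] [Algebra F L] (x y : L ⊗[F] A),
      P.toFun L (x * y) = P.toFun L x * P.toFun L y)
    (ρ : TS F A n →ₗ[F] B) (hρ : ρ ∘ₗ qA F n A = bet n P) (y z : TS F A n) :
    ρ (y * z) = ρ y * ρ z := by
  have key : ∀ d e : D A n, ρ (qA F n A (Finsupp.single d 1) * qA F n A (Finsupp.single e 1))
      = ρ (qA F n A (Finsupp.single d 1)) * ρ (qA F n A (Finsupp.single e 1)) := by
    intro d e
    let il := (Algebra.TensorProduct.includeLeft (R := F) (S := F) (A := MvPolynomial A F)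
        (B := MvPolynomial A F))
    let ir := (Algebra.TensorProduct.includeRight (R := F) (A := MvPolynomial A F)
        (B := MvPolynomial A F))
    have h1 := toFun_mul' P hm (LinearMap.rTensor A il.toLinearMap (xx F d.1.support))
      (LinearMap.rTensor A ir.toLinearMap (xx F e.1.support))
    rw [← PolynomialLaw.isCompat_apply, ← PolynomialLaw.isCompat_apply, rho_gam n P hP ρ hρ,
      gam_mul, gam_rTensor, gam_rTensor] at h1
    have h2 := congrArg (ev B (cpr F d.1 e.1)) h1
    rw [ev_lTensor, ev_mul, ev_mul, rho_gam n P hP ρ hρ, rho_gam n P hP ρ hρ, ev_lTensor,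
      ev_lTensor, xx, xx, gam_eq, gam_eq, ev_lTensor, ev_lTensor, ev_cc' n _ d subset_rfl,
      ev_cc' n _ e subset_rfl] at h2
    exact h2
  obtain ⟨s, rfl⟩ := qA_surj F n A y
  obtain ⟨t, rfl⟩ := qA_surj F n A z
  have hs : ∀ (r : F) (d : D A n), (Finsupp.single d r : D A n →₀ F) = r • Finsupp.single d 1 := by
    intro r d; simp
  induction s using Finsupp.induction_linear with
  | zero => simp
  | add a b ha hb => simp only [map_add, add_mul, ha, hb]
  | single d r =>
    induction t using Finsupp.induction_linear with
    | zero => simp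
    | add a b ha hb => simp only [map_add, mul_add, ha, hb]
    | single e r' =>
      rw [hs r d, hs r' e]
      simp only [map_smul, smul_mul_smul_comm, key]

lemma rho_one (ρ : TS F A n →ₗ[F] B) 
    (h : P.toFun F (1 : F ⊗[F] A) = LinearMap.lTensor F ρ (gam n (1 : F ⊗[F] A)))
    (h1 : P.toFun F (1 : F ⊗[F] A) = 1) : ρ 1 = 1 := by
  rw [h1, gam_one, Algebra.TensorProduct.one_def, Algebra.TensorProduct.one_def,
    LinearMap.lTensor_tmul] at h
  have := congrArg (TensorProduct.lid F B) h
  simpa using this.symm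

end Rep

variable (F : Type u) [CommRing F] (A : Type v) [CommRing A] [Algebra F A] (n : ℕ)

/-- **`TS^n_F(A)` represents multiplicative homogeneous polynomial laws of degree `n`.**
For a flat commutative `F`-algebra `A` there is a (unique) polynomial law
`γ_n : A → TS^n_F(A)` whose composition with the inclusion `TS^n_F(A) ⊆ A^{⊗n}` is the
`n`-th tensor power law `x ↦ x^{⊗n}`, and for every commutative `F`-algebra `B` the map
`ρ ↦ ρ ∘ γ_n` is a bijection from `AlgHom_F(TS^n_F(A), B)` onto the set of multiplicative
polynomial laws `A → B` homogeneous of degree `n`. -/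
theorem ts_represents_multiplicative_homogeneous_laws [Module.Flat F A] :
    ∃ γ : ∀ (L : Type u) [CommRing L] [Algebra F L], L ⊗[F] A → L ⊗[F] ↥(TS F A n),
      IsPolyLaw F A (↥(TS F A n)) γ ∧
      (∀ (L : Type u) [CommRing L] [Algebra F L] (x : L ⊗[F] A),
        LinearMap.lTensor L (TS F A n).val.toLinearMap (γ L x) = gammaFull F A n L x) ∧
      ∀ (B : Type w) [CommRing B] [Algebra F B],
        Function.Injective (compGamma F A n γ B) ∧
        Set.range (compGamma F A n γ B)
          = {φ | IsPolyLaw F A B φ ∧ IsMultiplicativeLaw F A B φ ∧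
              IsHomogeneousLaw F A B n φ} := by
  classical
  have hmap : ∀ (B : Type w) [CommRing B] [Algebra F B] (ρ : TS F A n →ₐ[F] B) (L : Type u)
      [CommRing L] [Algebra F L] (x : L ⊗[F] A),
      compGamma F A n (fun L _ _ x => gam n x) B ρ L x
        = LinearMap.lTensor L ρ.toLinearMap (gam n x) := fun B _ _ ρ L _ _ x => rfl
  have hpoly : ∀ (B : Type w) [CommRing B] [Algebra F B] (ρ : TS F A n →ₐ[F] B),
      IsPolyLaw F A B (compGamma F A n (fun L _ _ x => gam n x) B ρ) := by
    intro B _ _ ρ L L' _ _ _ _ f x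
    rw [hmap, hmap, gam_rTensor, ← LinearMap.comp_apply, ← LinearMap.comp_apply,
      LinearMap.lTensor_comp_rTensor, LinearMap.rTensor_comp_lTensor]
  refine ⟨fun L _ _ x => gam n x, ?_, ?_, ?_⟩
  · intro L L' _ _ _ _ f x
    exact gam_rTensor n f x
  · intro L _ _ x
    exact gam_spec n x
  intro B _ _
  constructor
  · intro ρ ρ' h
    have e1 := rho_unique n (law _ (hpoly B ρ)) ρ.toLinearMap
      (fun L _ _ x => by rw [law_toFun, hmap])
    have e2 := rho_unique n (law _ (hpoly B ρ)) ρ'.toLinearMap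
      (fun L _ _ x => by rw [law_toFun, h, hmap])
    apply AlgHom.ext
    intro y
    obtain ⟨s, rfl⟩ := qA_surj F n A y
    exact LinearMap.congr_fun (e1.trans e2.symm) s
  · apply Set.eq_of_subset_of_subset
    · rintro _ ⟨ρ, rfl⟩
      refine ⟨hpoly B ρ, ?_, ?_⟩
      · intro L _ _
        constructor
        · intro x y
          rw [hmap, hmap, hmap, gam_mul, lTensor_mul']
        · rw [hmap, gam_one]
          exact map_one (Algebra.TensorProduct.map (AlgHom.id F L) ρ)
      · intro L _ _ c x
        rw [hmap, hmap, gam_smul]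
        exact (TensorProduct.AlgebraTensorModule.lTensor L L ρ.toLinearMap).map_smul
          (c ^ n) (gam n x)
    · rintro φ ⟨h1, h2, h3⟩
      have hP : ∀ (L : Type u) [CommRing L] [Algebra F L] (c : L) (x : L ⊗[F] A),
          (law φ h1).toFun L (c • x) = c ^ n • (law φ h1).toFun L x := by
        intro L _ _ c x
        rw [law_toFun, law_toFun, h3 L c x]
      have hm : ∀ (L : Type u) [CommRing L] [Algebra F L] (x y : L ⊗[F] A),
          (law φ h1).toFun L (x * y) = (law φ h1).toFun L x * (law φ h1).toFun L y := by
        intro L _ _ x y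
        rw [law_toFun, law_toFun, law_toFun, (h2 L).1]
      obtain ⟨ρ, hρ⟩ := exists_rho n (law φ h1) hP
      refine ⟨AlgHom.ofLinearMap ρ (rho_one n (law φ h1) ρ (rho_gam n _ hP ρ hρ 1) ?_)
        (rho_mul n _ hP hm ρ hρ), ?_⟩
      · rw [law_toFun, (h2 F).2]
      · funext L _ _ x
        exact (rho_gam n (law φ h1) hP ρ hρ x).symm.trans (law_toFun φ h1 L x)

end SymmetricProduct
end
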